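/- P-type setup: let κ₁ < κ₂ < κ₃ < κ₄ with κ₂+κ₃ ≠ κ₁+κ₄; a₂₃ = (κ₂+κ₃)/2, a₁₄ = (κ₁+κ₄)/2, c₂₃ = (κ₃−κ₂)²/4, c₁₄ = (κ₄−κ₁)²/4; let (b₁,b₂) be the unique solution of b₁ + 2a₂₃b₂ = ω₂₃, b₁ + 2a₁₄b₂ = ω₁₄ with ω_{ij} = κᵢ²+κᵢκⱼ+κⱼ². Define θⱼ(X,Y) := κⱼX + κⱼ²Y, T(X,Y) := (κ₂−κ₁)e^{θ₁+θ₂} + (κ₃−κ₁)e^{θ₁+θ₃} + (κ₄−κ₂)e^{θ₂+θ₄} + (κ₄−κ₃)e^{θ₃+θ₄} (which is everywhere positive), u₂ := 2∂_X² log T, and z₁ := X + 2a₂₃Y. Assume 0 < α < min{√c₂₃, | |b₂ − 3a₁₄| − √c₁₄ |}. If U₂ : ℝ² → ℂ is measurable with ∫∫ |U₂(X,Y)|² e^{2αz₁} dXdY < ∞ and satisfies, in the sense of distributions, 3∂_Y²U₂ − 4b₂∂_X∂_YU₂ + ∂_X²(∂_X²U₂ − 4b₁U₂ + 6u₂U₂)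 = 0 (i.e. ∫∫ U₂·(3∂_Y²ψ − 4b₂∂_X∂_Yψ + ∂_X⁴ψ − 4b₁∂_X²ψ) + 6u₂U₂·∂_X²ψ dXdY = 0 for every smooth compactly supported ψ), then U₂ = 0 almost everywhere. -/

import Mathlib

open MeasureTheory

noncomputable def pX {E : Type*} [NormedAddCommGroup E] [NormedSpace ℝ E]
    (f : ℝ → ℝ → E) : ℝ → ℝ → E :=
  fun x y => deriv (fun s => f s y) x

noncomputable def pY {E : Type*} [NormedAddCommGroup E] [NormedSpace ℝ E]
    (f : ℝ → ℝ → E) : ℝ → ℝ → E :=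
  fun x y => deriv (fun s => f x s) y

/-- τ-function of the stationary P-type 2-line soliton -/
noncomputable def Ptau (κ₁ κ₂ κ₃ κ₄ : ℝ) (X Y : ℝ) : ℝ :=
  (κ₂ - κ₁) * Real.exp ((κ₁ + κ₂)*X + (κ₁^2 + κ₂^2)*Y)
  + (κ₃ - κ₁) * Real.exp ((κ₁ + κ₃)*X + (κ₁^2 + κ₃^2)*Y)
  + (κ₄ - κ₂) * Real.exp ((κ₂ + κ₄)*X + (κ₂^2 + κ₄^2)*Y)
  + (κ₄ - κ₃) * Real.exp ((κ₃ + κ₄)*X + (κ₃^2 + κ₄^2)*Y)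

/-- the stationary P-type 2-line soliton u₂ = 2∂_X² log T -/
noncomputable def Pu2 (κ₁ κ₂ κ₃ κ₄ : ℝ) (X Y : ℝ) : ℝ :=
  2 * pX (pX fun a b => Real.log (Ptau κ₁ κ₂ κ₃ κ₄ a b)) X Y

/-- A pair of commuting derivations on a commutative algebra of coefficients. -/
structure DiffPair (C : Type*) [CommRing C] [Algebra ℝ C] where
  dx : Derivation ℝ C C
  dy : Derivation ℝ C C
  comm : ∀ c, dx (dy c) = dy (dx c)

/-- A flat connection on a module, over a pair of commuting derivations. -/
structure FlatConn {C : Type*} [CommRing C] [Algebra ℝ C] (d : DiffPair C)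
    (M : Type*) [AddCommGroup M] [Module C M] where
  X : M →+ M
  Y : M →+ M
  comm : ∀ m, X (Y m) = Y (X m)
  leibX : ∀ (c : C) m, X (c • m) = d.dx c • m + c • X m
  leibY : ∀ (c : C) m, Y (c • m) = d.dy c • m + c • Y m

lemma Derivation.map_ofNat {C : Type*} [CommRing C] [Algebra ℝ C] (D : Derivation ℝ C C)
    (n : ℕ) [n.AtLeastTwo] : D (ofNat(n) : C) = 0 := by
  rw [← Nat.cast_ofNat, D.map_natCast]

section
variable {C : Type*} [CommRing C] [Algebra ℝ C] {d : DiffPair C}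
    {M : Type*} [AddCommGroup M] [Module C M]

/-- The gauge transform `∇ + (q, j)` of a flat connection by a closed form. -/
def FlatConn.gauge (D : FlatConn d M) (q j : C) (h : d.dx j = d.dy q) : FlatConn d M where
  X := D.X + (DistribSMul.toAddMonoidHom M q)
  Y := D.Y + (DistribSMul.toAddMonoidHom M j)
  comm m := by
    simp [D.leibX, D.leibY, D.comm, h, smul_smul, mul_comm]; abel
  leibX c m := by simp [D.leibX, smul_smul, mul_comm]; abel
  leibY c m := by simp [D.leibY, smul_smul, mul_comm]; abel

lemma FlatConn.gauge_X (D : FlatConn d M) (q j : C) (h : d.dx j = d.dy q) (m : M) :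
    (D.gauge q j h).X m = D.X m + q • m := rfl

lemma FlatConn.gauge_Y (D : FlatConn d M) (q j : C) (h : d.dx j = d.dy q) (m : M) :
    (D.gauge q j h).Y m = D.Y m + j • m := rfl

/-- The adjoint of the third-order Lax operator, times two. -/
def Mst (D : FlatConn d M) (b₁ b₂ u w : C) (m : M) : M :=
  (-2 : C) • D.X (D.X (D.X m)) - (3 : C) • D.X (u • m) + w • m + (2 * b₁) • D.X m
    - (2 * b₂) • (D.X (D.X m) + u • m)

/-- The linearized stationary KP-II operator acting on second `X`-antiderivatives. -/
def Ast (D : FlatConn d M) (b₁ b₂ u : C) (m : M) : M :=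
  (3 : C) • D.Y (D.Y m) - (4 * b₂) • D.Y (D.X m) + D.X (D.X (D.X (D.X m)))
   - (4 * b₁) • D.X (D.X m) + (6 * u) • D.X (D.X m)

/-- The heat operator of the Lax pair with potential `u`. -/
def Hst (D : FlatConn d M) (u : C) (m : M) : M := D.Y m + D.X (D.X m) + u • m

/-- The source term of the linearized Darboux transformation. -/
def Theta (D : FlatConn d M) (b₂ q : C) (m : M) : M :=
   (-3 : C) • D.X (D.X (D.X m)) + (6 * q) • D.X (D.X m) + (3 : C) • D.Y (D.X m)
    - (4 * b₂) • D.X (D.X m)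

/-- The third-order Lax operator, times two. -/
def Mop (D : FlatConn d M) (b₁ b₂ u w : C) (m : M) : M :=
  (2 : C) • D.X (D.X (D.X m)) + (3 * u) • D.X m + w • m - (2 * b₁) • D.X m
    - (2 * b₂) • (D.X (D.X m) + u • m)

def Hop (D : FlatConn d M) (u : C) (m : M) : M := D.Y m - D.X (D.X m) - u • m

lemma Mst_comm_Hst (D : FlatConn d M) (b₁ b₂ u w : C)
    (hb₁x : d.dx b₁ = 0) (hb₁y : d.dy b₁ = 0) (hb₂x : d.dx b₂ = 0) (hb₂y : d.dy b₂ = 0)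
    (hwx : 2 * d.dx w = 3 * (d.dx (d.dx u) + d.dy u))
    (hwy : d.dy w = d.dx (d.dx (d.dx u)) - 3 * u * d.dx u + 2 * b₁ * d.dx u + 3 * d.dy (d.dx u)
      - d.dx (d.dx w) + 2 * b₂ * d.dy u)
    (m : M) :
    Mst D b₁ b₂ u w (Hst D u m) = Hst D u (Mst D b₁ b₂ u w m) := by
  simp only [Mst, Hst, map_add, map_sub, map_neg, map_zero, D.leibX, D.leibY, D.comm,
    Derivation.leibniz, Derivation.map_ofNat, smul_eq_mul, hb₁x, hb₁y, hb₂x, hb₂y, mul_zero,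
    add_zero, zero_add, zero_smul]
  match_scalars
  all_goals first | ring1 | linear_combination -hwy | linear_combination -hwx

/-- Darboux seed data: `(q, j)` is the logarithmic gradient of a common eigenfunction of the Lax
pair with potential `u`, with eigenvalue `μ`. -/
structure Seed (d : DiffPair C) (b₁ b₂ μ u w q j : C) : Prop where
  hb₁x : d.dx b₁ = 0
  hb₁y : d.dy b₁ = 0
  hb₂x : d.dx b₂ = 0
  hb₂y : d.dy b₂ = 0
  hμx : d.dx μ = 0
  hμy : d.dy μ = 0
  hj : d.dx j = d.dy q
  hu : u = j - d.dx q - q * q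
  hw : w = 2 * μ - (2 * d.dx (d.dx q) + 6 * q * d.dx q + 2 * q * q * q + 3 * u * q - 2 * b₁ * q
    - 2 * b₂ * j)

variable {b₁ b₂ μ u w q j : C}

lemma Seed.neg_closed (S : Seed d b₁ b₂ μ u w q j) : d.dx (-j) = d.dy (-q) := by
  rw [map_neg, map_neg, S.hj]

lemma Seed.dx_Hst (S : Seed d b₁ b₂ μ u w q j) (D : FlatConn d M) (R : M) :
    D.X (D.Y R + D.X (D.X R) - (2 * q) • D.X R)
      = Hst (D.gauge (-q) (-j) S.neg_closed) u (D.X R) := by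
  obtain ⟨hb₁x, hb₁y, hb₂x, hb₂y, hμx, hμy, hj, hu, hw⟩ := S
  simp only [Hst, FlatConn.gauge_X, FlatConn.gauge_Y, map_add, map_sub, map_neg, D.leibX, D.comm,
    Derivation.leibniz, Derivation.map_ofNat, smul_eq_mul, mul_zero, add_zero, hu]
  match_scalars
  all_goals ring1

lemma Seed.dx_Mst (S : Seed d b₁ b₂ μ u w q j) (D : FlatConn d M) (R : M) :
    D.X (Mst (D.gauge (-q) (-j) S.neg_closed) b₁ b₂ (u + 2 * d.dx q)
      (w + 3 * (d.dx (d.dx q) + d.dy q)) R - (2 * μ) • R)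
      = Mst (D.gauge (-q) (-j) S.neg_closed) b₁ b₂ u w (D.X R) - (2 * μ) • (D.X R) := by
  obtain ⟨hb₁x, hb₁y, hb₂x, hb₂y, hμx, hμy, hj, hu, hw⟩ := S
  subst hw hu
  simp only [Mst, FlatConn.gauge_X, map_add, map_sub, map_neg, D.leibX,
    Derivation.leibniz, Derivation.map_ofNat, smul_eq_mul, hb₁x, hb₂x, d.comm, mul_zero, add_zero,
    zero_add, zero_smul, hj, hμx]
  match_scalars
  all_goals ring1

lemma Seed.compat (S : Seed d b₁ b₂ μ u w q j) (D : FlatConn d M) (W : M)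
    (hW : Ast D b₁ b₂ (u + 2 * d.dx q) W = 0) :
    Mst (D.gauge (-q) (-j) S.neg_closed) b₁ b₂ u w (D.X (D.X (D.X ((2 : C) • W))))
      - (2 * μ) • (D.X (D.X (D.X ((2 : C) • W))))
      = Hst (D.gauge (-q) (-j) S.neg_closed) u (D.X (Theta D b₂ q W)) := by
  obtain ⟨hb₁x, hb₁y, hb₂x, hb₂y, hμx, hμy, hj, hu, hw⟩ := S
  subst hw hu
  have h1 := congrArg (fun m => D.X (D.X m)) hW
  simp only [Ast, hj, map_add, map_sub, map_zero, D.leibX, D.comm,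
    Derivation.leibniz, Derivation.map_ofNat, smul_eq_mul, hb₁x, hb₂x, d.comm, mul_zero, add_zero,
    zero_add, zero_smul] at h1
  simp only [Mst, Hst, Theta, FlatConn.gauge_X, FlatConn.gauge_Y, map_add, map_sub, map_neg,
    map_zero, D.leibX, D.leibY, D.comm, Derivation.leibniz, Derivation.map_ofNat, smul_eq_mul, hb₂x,
    hb₂y, mul_zero, add_zero, zero_add, zero_smul, hj]
  refine sub_eq_zero.1 (Eq.trans ?_ (neg_eq_zero.2 h1))
  match_scalars
  all_goals ring1

lemma Seed.descend (S : Seed d b₁ b₂ μ u w q j) (D : FlatConn d M) (W R : M) :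
    Ast D b₁ b₂ u (W + R) = Ast D b₁ b₂ (u + 2 * d.dx q) W
      - (2 : C) • D.X (Mst (D.gauge (-q) (-j) S.neg_closed) b₁ b₂ (u + 2 * d.dx q)
      (w + 3 * (d.dx (d.dx q) + d.dy q)) R - (2 * μ) • R + Theta D b₂ q W)
      + (3 : C) • D.Y (D.Y R + D.X (D.X R) - (2 * q) • D.X R + (2 : C) • D.X (D.X W))
      - (3 : C) • D.X (D.X (D.Y R + D.X (D.X R) - (2 * q) • D.X R + (2 : C) • D.X (D.X W)))
      + (6 * q - 4 * b₂) • D.X (D.Y R + D.X (D.X R) - (2 * q) • D.X R + (2 : C) • D.X (D.X W)) := by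
  obtain ⟨hb₁x, hb₁y, hb₂x, hb₂y, hμx, hμy, hj, hu, hw⟩ := S
  subst hw hu
  simp only [Mst, Ast, Theta, FlatConn.gauge_X, map_add, map_sub, map_neg, D.leibX, D.leibY, D.comm,
    Derivation.leibniz, Derivation.map_ofNat, smul_eq_mul, hb₁x, hb₂x, d.comm, mul_zero, add_zero,
    zero_add, zero_smul, hj, hμx]
  match_scalars
  all_goals ring1

lemma Seed.kernel_H (S : Seed d b₁ b₂ μ u w q j) (D : FlatConn d M) (R : M) :
   Hop (D.gauge q j S.hj) u R = (D.Y R + D.X (D.X R) - (2 * q) • D.X R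
     - (2 : C) • D.X (D.X R)) := by
  obtain ⟨hb₁x, hb₁y, hb₂x, hb₂y, hμx, hμy, hj, hu, hw⟩ := S
  simp only [Hop, FlatConn.gauge_X, FlatConn.gauge_Y, map_add, D.leibX, hu]
  match_scalars
  all_goals ring1

lemma Seed.kernel_M (S : Seed d b₁ b₂ μ u w q j) (D : FlatConn d M) (R : M) :
   Mop (D.gauge q j S.hj) b₁ b₂ u w R - (2 * μ) • R =
     -(Mst (D.gauge (-q) (-j) S.neg_closed) b₁ b₂ (u + 2 * d.dx q)
      (w + 3 * (d.dx (d.dx q) + d.dy q)) R - (2 * μ) • R - Theta D b₂ q R)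
      - (3 : C) • D.X (D.Y R + D.X (D.X R) - (2 * q) • D.X R - (2 : C) • D.X (D.X R)) := by
  obtain ⟨hb₁x, hb₁y, hb₂x, hb₂y, hμx, hμy, hj, hu, hw⟩ := S
  subst hw hu
  simp only [Mst, Mop, Theta, FlatConn.gauge_X, map_add, map_sub, map_neg, D.leibX, D.comm,
    Derivation.leibniz, Derivation.map_ofNat, smul_eq_mul, mul_zero, add_zero, zero_add, zero_smul,
    hj]
  match_scalars
  all_goals ring1
end

section
variable {C : Type*} [CommRing C] [Algebra ℝ C] {d : DiffPair C}
    {M : Type*} [AddCommGroup M] [Module C M]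

/-- Multiplication by `g` intertwines the connections `D` and `D'`. -/
def Intertwines (g : C) (D D' : FlatConn d M) : Prop :=
  (∀ m, D'.X (g • m) = g • D.X m) ∧ ∀ m, D'.Y (g • m) = g • D.Y m

lemma Intertwines.Mst {g : C} {D D' : FlatConn d M} (h : Intertwines g D D') (b₁ b₂ u w : C)
    (m : M) :
    Mst D' b₁ b₂ u w (g • m) = g • Mst D b₁ b₂ u w m := by
  simp only [_root_.Mst, smul_comm u g, h.1]
  module

lemma Intertwines.Hst {g : C} {D D' : FlatConn d M} (h : Intertwines g D D') (u : C) (m : M) :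
    Hst D' u (g • m) = g • Hst D u m := by
  simp only [_root_.Hst, h.1, h.2]
  module

lemma Intertwines.Mop {g : C} {D D' : FlatConn d M} (h : Intertwines g D D') (b₁ b₂ u w : C)
    (m : M) :
    Mop D' b₁ b₂ u w (g • m) = g • Mop D b₁ b₂ u w m := by
  simp only [_root_.Mop, h.1]
  module

lemma Intertwines.Hop {g : C} {D D' : FlatConn d M} (h : Intertwines g D D') (u : C) (m : M) :
    Hop D' u (g • m) = g • Hop D u m := by
  simp only [_root_.Hop, h.1, h.2]
  module

lemma FlatConn.intertwines_gauge (D : FlatConn d M) {g q j q' j' : C} (h : d.dx j = d.dy q)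
    (h' : d.dx j' = d.dy q') (hx : d.dx g = g * (q - q')) (hy : d.dy g = g * (j - j')) :
    Intertwines g (D.gauge q j h) (D.gauge q' j' h') := by
  constructor <;> intro m <;>
    simp only [FlatConn.gauge_X, FlatConn.gauge_Y, D.leibX, D.leibY, hx, hy] <;> module

lemma Mst_sub (D : FlatConn d M) (b₁ b₂ u w : C) (m n : M) :
    Mst D b₁ b₂ u w (m - n) = Mst D b₁ b₂ u w m - Mst D b₁ b₂ u w n := by
  simp only [Mst, map_sub, smul_sub]; module

lemma Mst_add (D : FlatConn d M) (b₁ b₂ u w : C) (m n : M) :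
    Mst D b₁ b₂ u w (m + n) = Mst D b₁ b₂ u w m + Mst D b₁ b₂ u w n := by
  simp only [Mst, map_add, smul_add]; module

lemma Hst_sub (D : FlatConn d M) (u : C) (m n : M) :
    Hst D u (m - n) = Hst D u m - Hst D u n := by
  simp only [Hst, map_sub, smul_sub]; abel

lemma Hst_neg (D : FlatConn d M) (u : C) (m : M) : Hst D u (-m) = - Hst D u m := by
  simp only [Hst, map_neg, smul_neg]; abel

lemma Hst_smul_const (D : FlatConn d M) (u c : C) (hx : d.dx c = 0) (hy : d.dy c = 0) (m : M) :
    Hst D u (c • m) = c • Hst D u m := by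
  simp only [Hst, D.leibX, D.leibY, hx, hy, zero_smul, zero_add]; module

/-- Conditions on the coefficients under which `Mst` and `Hst` commute. -/
structure CommutingPair (d : DiffPair C) (b₁ b₂ u w : C) : Prop where
  hb₁x : d.dx b₁ = 0
  hb₁y : d.dy b₁ = 0
  hb₂x : d.dx b₂ = 0
  hb₂y : d.dy b₂ = 0
  hwx : 2 * d.dx w = 3 * (d.dx (d.dx u) + d.dy u)
  hwy : d.dy w = d.dx (d.dx (d.dx u)) - 3 * u * d.dx u + 2 * b₁ * d.dx u + 3 * d.dy (d.dx u)
      - d.dx (d.dx w) + 2 * b₂ * d.dy u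

variable {b₁ b₂ μ u w q j : C}

lemma Seed.heat_of_gauge (S : Seed d b₁ b₂ μ u w q j) (hP : CommutingPair d b₁ b₂ u w)
    (D D' : FlatConn d M) (W : M)
    (hW : Ast D b₁ b₂ (u + 2 * d.dx q) W = 0) {g : C}
    (hg : Intertwines g (D.gauge (-q) (-j) S.neg_closed) D')
    (hinj : ∀ m, Mst D' b₁ b₂ u w m - (2 * μ) • m = 0 → m = 0) {s : M}
    (hs : Mst D' b₁ b₂ u w s - (2 * μ) • s = -(g • D.X (Theta D b₂ q W))) :
    Hst D' u s = -(g • D.X (D.X (D.X ((2 : C) • W)))) := by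
  rw [← add_eq_zero_iff_eq_neg]
  apply hinj
  have h1 := S.compat D W hW
  have h2 := congrArg (g • ·) h1
  simp only [smul_sub] at h2
  rw [← hg.Mst, ← hg.Hst] at h2
  have h3 := congrArg (Hst D' u) hs
  rw [Hst_sub, Hst_neg, ← Mst_comm_Hst D' b₁ b₂ u w hP.hb₁x hP.hb₁y hP.hb₂x hP.hb₂y hP.hwx hP.hwy,
    Hst_smul_const _ _ (2 * μ) (by simp [S.hμx, Derivation.map_ofNat])
    (by simp [S.hμy, Derivation.map_ofNat])] at h3
  rw [Mst_add, smul_add]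
  rw [smul_comm g (2 * μ)] at h2
  have := congrArg₂ (· + ·) h2 h3
  simp only [add_neg_cancel] at this
  rw [← this]; abel

/-- A null vector `W` of the linearized operator with the transformed potential is carried to one
with the original potential, and if the image vanishes then `W` solves the gauged Lax pair. -/
lemma Seed.step (S : Seed d b₁ b₂ μ u w q j) (hP : CommutingPair d b₁ b₂ u w)
    (D D₁ D₂ D₃ : FlatConn d M) (hX : Function.Bijective D.X) (W : M)
    (hW : Ast D b₁ b₂ (u + 2 * d.dx q) W = 0) {g₁ g₂ k₁ k₂ A B H : C}
    (hg₁ : Intertwines g₁ (D.gauge (-q) (-j) S.neg_closed) D₁)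
    (hg₂ : Intertwines g₂ (D.gauge (-q) (-j) S.neg_closed) D₂)
    (hk₂ : Intertwines k₂ D₁ D₃) (hk₁ : Intertwines k₁ D₂ D₃)
    (hgk₁ : g₁ = H * k₁) (hgk₂ : g₂ = H * k₂) (hAB : A * g₁ + B * g₂ = 1)
    (h₁ : Function.Bijective (fun m => Mst D₁ b₁ b₂ u w m - (2 * μ) • m))
    (h₂ : Function.Bijective (fun m => Mst D₂ b₁ b₂ u w m - (2 * μ) • m))
    (h₃ : ∀ m, Mst D₃ b₁ b₂ u w m - (2 * μ) • m = 0 → Hst D₃ u m = 0 → m = 0) :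
    ∃ R, Ast D b₁ b₂ u (W + R) = 0 ∧ (W + R = 0 → Hop (D.gauge q j S.hj) u R = 0 ∧
      Mop (D.gauge q j S.hj) b₁ b₂ u w R - (2 * μ) • R = 0) := by
  set G := D.gauge (-q) (-j) S.neg_closed with hG
  obtain ⟨s₁, hs₁⟩ := h₁.2 (-(g₁ • D.X (Theta D b₂ q W)))
  obtain ⟨s₂, hs₂⟩ := h₂.2 (-(g₂ • D.X (Theta D b₂ q W)))
  have inj₁ : ∀ m, Mst D₁ b₁ b₂ u w m - (2 * μ) • m = 0 → m = 0 := fun m hm =>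
    h₁.1 (by simp only [hm]; simp [Mst])
  have inj₂ : ∀ m, Mst D₂ b₁ b₂ u w m - (2 * μ) • m = 0 → m = 0 := fun m hm =>
    h₂.1 (by simp only [hm]; simp [Mst])
  have t₁ := S.heat_of_gauge hP D D₁ W hW hg₁ inj₁ hs₁
  have t₂ := S.heat_of_gauge hP D D₂ W hW hg₂ inj₂ hs₂
  beta_reduce at hs₁ hs₂
  have hm : k₂ • s₁ = k₁ • s₂ := by
    rw [← sub_eq_zero]
    apply h₃
    · rw [Mst_sub, hk₂.Mst, hk₁.Mst, sub_eq_iff_eq_add.1 hs₁, sub_eq_iff_eq_add.1 hs₂, hgk₁, hgk₂]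
      module
    · rw [Hst_sub, hk₂.Hst, hk₁.Hst, t₁, t₂, hgk₁, hgk₂]
      module
  have hm' : g₂ • s₁ = g₁ • s₂ := by
    rw [hgk₁, hgk₂, mul_smul, hm, mul_smul]
  obtain ⟨R, hR⟩ := hX.2 (A • s₁ + B • s₂)
  have r₁ : g₁ • D.X R = s₁ := by
    rw [hR]
    calc _ = (A * g₁) • s₁ + B • (g₁ • s₂) := by module
      _ = (A * g₁ + B * g₂) • s₁ := by rw [← hm']; module
      _ = s₁ := by rw [hAB, one_smul]
  have r₂ : g₂ • D.X R = s₂ := by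
    rw [hR]
    calc _ = A • (g₂ • s₁) + (B * g₂) • s₂ := by module
      _ = (A * g₁ + B * g₂) • s₂ := by rw [hm']; module
      _ = s₂ := by rw [hAB, one_smul]
  have glue : ∀ m : M, g₁ • m = 0 → g₂ • m = 0 → m = 0 := fun m e₁ e₂ => by
    rw [← one_smul C m, ← hAB, add_smul, mul_smul, mul_smul, e₁, e₂]; simp
  have E1' : Hst G u (D.X R) + D.X (D.X (D.X ((2 : C) • W))) = 0 := by
    apply glue
    · rw [smul_add, ← hg₁.Hst, r₁, t₁]; simp
    · rw [smul_add, ← hg₂.Hst, r₂, t₂]; simp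
  have E2' : Mst G b₁ b₂ u w (D.X R) - (2 * μ) • (D.X R) + D.X (Theta D b₂ q W) = 0 := by
    apply glue
    · rw [smul_add, smul_sub, ← hg₁.Mst, smul_comm g₁, r₁, hs₁]; simp
    · rw [smul_add, smul_sub, ← hg₂.Mst, smul_comm g₂, r₂, hs₂]; simp
  have hX0 : ∀ m : M, D.X m = 0 → m = 0 := fun m hm => hX.1 (by rw [hm, map_zero])
  rw [← S.dx_Hst, ← map_add] at E1'
  rw [← S.dx_Mst, ← map_add] at E2'
  have E1 := hX0 _ E1'
  have E2 := hX0 _ E2'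
  simp only [D.leibX, Derivation.map_ofNat, zero_smul, zero_add] at E1
  refine ⟨R, ?_, fun h => ?_⟩
  · rw [S.descend D W R, E1, E2, hW]; simp
  · obtain rfl : W = -R := eq_neg_of_add_eq_zero_left h
    have hT : Theta D b₂ q (-R) = - Theta D b₂ q R := by
      simp only [Theta, map_neg, smul_neg]; abel
    simp only [map_neg, smul_neg, ← sub_eq_add_neg] at E1
    rw [hT, ← sub_eq_add_neg] at E2
    rw [S.kernel_H, S.kernel_M, E1, E2]; simp

end

section
variable {C : Type*} [CommRing C] [Algebra ℝ C] {d : DiffPair C}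
    {M : Type*} [AddCommGroup M] [Module C M]

/-- `∂_X - c` is invertible for `c ≠ -α`, and constant coefficient transport equations have only the
trivial solution. -/
structure Admissible (D : FlatConn d M) (α : ℝ) : Prop where
  bij : ∀ c : ℝ, c ≠ -α → Function.Bijective fun m => D.X m - algebraMap ℝ C c • m
  transport : ∀ (β σ : ℝ) (m : M),
    D.Y m - algebraMap ℝ C β • D.X m - algebraMap ℝ C σ • m = 0 → m = 0

lemma FlatConn.transport_identity_st (E : FlatConn d M) (k k' s : ℝ) (m : M) (T : M → M)
    (hT : ∀ m, T m = E.Y m - algebraMap ℝ C (k + k') • E.X m - algebraMap ℝ C (k * k') • m) :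
    (2 : C) • T (T m - algebraMap ℝ C (-((s - k) * (s - k'))) • m)
      = (2 : C) • T (Hst E 0 m) - (2 : C) • (E.X (E.X (Hst E 0 m)) +
        algebraMap ℝ C (k + k') • E.X (Hst E 0 m) + algebraMap ℝ C (s * (k + k' - s)) • Hst E 0 m)
      - (E.X (Mst E (algebraMap ℝ C (-(k * k' + s * (k + k')))) (algebraMap ℝ C (k + k' + s)) 0 0 m
          - (2 * algebraMap ℝ C (k * k' * s)) • m)
        + algebraMap ℝ C (k + k' - s) • (Mst E (algebraMap ℝ C (-(k * k' + s * (k + k'))))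
          (algebraMap ℝ C (k + k' + s)) 0 0 m
          - (2 * algebraMap ℝ C (k * k' * s)) • m)) := by
  simp only [hT, Hst, Mst, map_add, map_sub, map_neg, map_mul, E.leibX, E.leibY, E.comm, zero_smul,
    map_zero, Derivation.leibniz, Derivation.map_ofNat, Derivation.map_algebraMap, smul_zero,
    add_zero, zero_add, sub_zero, neg_zero]
  match_scalars
  all_goals ring1

lemma FlatConn.transport_identity_op (E : FlatConn d M) (k k' s : ℝ) (m : M) (T : M → M)
    (hT : ∀ m, T m = E.Y m - algebraMap ℝ C (k + k') • E.X m + algebraMap ℝ C (k * k') • m) :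
    (2 : C) • T (T m - algebraMap ℝ C ((s - k) * (s - k')) • m)
      = (2 : C) • T (Hop E 0 m) + (2 : C) • (E.X (E.X (Hop E 0 m)) -
        algebraMap ℝ C (k + k') • E.X (Hop E 0 m) + algebraMap ℝ C (s * (k + k' - s)) • Hop E 0 m)
      + (E.X (Mop E (algebraMap ℝ C (-(k * k' + s * (k + k')))) (algebraMap ℝ C (k + k' + s)) 0 0 m
          - (2 * algebraMap ℝ C (k * k' * s)) • m)
        - algebraMap ℝ C (k + k' - s) • (Mop E (algebraMap ℝ C (-(k * k' + s * (k + k'))))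
          (algebraMap ℝ C (k + k' + s)) 0 0 m
          - (2 * algebraMap ℝ C (k * k' * s)) • m)) := by
  simp only [hT, Hop, Mop, map_add, map_sub, map_neg, map_mul, E.leibX, E.leibY, E.comm, zero_smul,
    map_zero, Derivation.leibniz, Derivation.map_ofNat, Derivation.map_algebraMap, smul_zero,
    add_zero, zero_add, sub_zero, neg_zero]
  match_scalars
  all_goals ring1

lemma two_smul_cancel {m : M} (h : (2 : C) • m = 0) : m = 0 := by
  have h2 : algebraMap ℝ C (1 / 2) * 2 = 1 := by
    rw [← map_ofNat (algebraMap ℝ C) 2, ← map_mul]; norm_num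
  rw [← one_smul C m, ← h2, mul_smul, h, smul_zero]

/-- `b₂`, `-b₁` and `μ` are the elementary symmetric functions of `k`, `k'` and `s`. -/
structure Roots (k k' s b₁ b₂ μ : ℝ) : Prop where
  hb₁ : b₁ = -(k * k' + s * (k + k'))
  hb₂ : b₂ = k + k' + s
  hμ : μ = k * k' * s

variable {α k k' s b₁ b₂ μ : ℝ} {r t : C}

lemma Admissible.joint_kernel_st {D : FlatConn d M} (hD : Admissible D α)
    (hr : Roots k k' s b₁ b₂ μ) (E : FlatConn d M)
    (hEX : ∀ m, E.X m = D.X m + (r - algebraMap ℝ C (k + k')) • m)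
    (hEY : ∀ m, E.Y m = D.Y m + (algebraMap ℝ C (k + k') * r
      - algebraMap ℝ C (k * k' + k ^ 2 + k' ^ 2)) • m)
    (m : M)
    (h₁ : Mst E (algebraMap ℝ C b₁) (algebraMap ℝ C b₂) 0 0 m - (2 * algebraMap ℝ C μ) • m = 0)
    (h₂ : Hst E 0 m = 0) : m = 0 := by
  obtain ⟨rfl, rfl, rfl⟩ := hr
  have key := E.transport_identity_st k k' s m
    (fun m => D.Y m - algebraMap ℝ C (k + k') • D.X m) (fun m => by
      simp only [hEX, hEY, map_add, map_mul, map_pow]; module)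
  rw [h₁, h₂] at key
  simp only [map_zero, smul_zero, sub_zero, add_zero] at key
  have := two_smul_cancel key
  have := hD.transport (k + k') 0 (_ - _) (by rw [map_zero, zero_smul, sub_zero]; exact this)
  exact hD.transport (k + k') _ _ this

lemma Admissible.joint_kernel_op {D : FlatConn d M} (hD : Admissible D α)
    (hr : Roots k k' s b₁ b₂ μ) (E : FlatConn d M)
    (hEX : ∀ m, E.X m = D.X m + r • m)
    (hEY : ∀ m, E.Y m = D.Y m + (algebraMap ℝ C (k + k') * r - algebraMap ℝ C (k * k')) • m)
    (m : M)
    (h₁ : Mop E (algebraMap ℝ C b₁) (algebraMap ℝ C b₂) 0 0 m - (2 * algebraMap ℝ C μ) • m = 0)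
    (h₂ : Hop E 0 m = 0) : m = 0 := by
  obtain ⟨rfl, rfl, rfl⟩ := hr
  have key := E.transport_identity_op k k' s m
    (fun m => D.Y m - algebraMap ℝ C (k + k') • D.X m) (fun m => by
      simp only [hEX, hEY, map_add, map_mul]; module)
  rw [h₁, h₂] at key
  simp only [map_zero, smul_zero, sub_zero, add_zero] at key
  have := two_smul_cancel key
  have := hD.transport (k + k') 0 (_ - _) (by rw [map_zero, zero_smul, sub_zero]; exact this)
  exact hD.transport (k + k') _ _ this

lemma Admissible.bijective_add {D : FlatConn d M} (hD : Admissible D α) {E : FlatConn d M} {κ : ℝ}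
    (hEX : ∀ m, E.X m = D.X m - algebraMap ℝ C κ • m) {c : ℝ} (hc : c - κ ≠ α) :
    Function.Bijective fun m => E.X m + algebraMap ℝ C c • m := by
  convert hD.bij (κ - c) (fun h => hc (by linarith)) using 2 with m
  rw [hEX, map_sub]; module

lemma two_smul_bijective : Function.Bijective fun m : M => (-2 : C) • m := by
  have h2 : algebraMap ℝ C (-1 / 2) * (-2) = 1 := by
    rw [← map_ofNat (algebraMap ℝ C) 2, ← map_neg, ← map_mul]; norm_num
  refine Function.bijective_iff_has_inverse.2 ⟨fun m => algebraMap ℝ C (-1 / 2) • m,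
    fun m => ?_, fun m => ?_⟩
  · simp only [smul_smul, h2, one_smul]
  · simp only [smul_smul, mul_comm (-2 : C), h2, one_smul]

/-- The constant coefficient third-order Lax operators are invertible away from the weight. -/
lemma Admissible.vacuum_bijective {D : FlatConn d M} (hD : Admissible D α)
    (hr : Roots k k' s b₁ b₂ μ) {E : FlatConn d M} {κ : ℝ}
    (hEX : ∀ m, E.X m = D.X m - algebraMap ℝ C κ • m)
    (h₁ : k - κ ≠ α) (h₂ : k' - κ ≠ α) (h₃ : s - κ ≠ α) :
    Function.Bijective fun m => Mst E (algebraMap ℝ C b₁) (algebraMap ℝ C b₂) 0 0 m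
      - (2 * algebraMap ℝ C μ) • m := by
  obtain ⟨rfl, rfl, rfl⟩ := hr
  convert (two_smul_bijective (C := C)).comp ((hD.bijective_add hEX h₁).comp
    ((hD.bijective_add hEX h₂).comp (hD.bijective_add hEX h₃))) using 2 with m
  simp only [Function.comp, Mst, map_add, map_neg, map_mul, E.leibX, zero_smul,
    map_zero, Derivation.map_algebraMap, smul_zero, add_zero, zero_add, sub_zero]
  match_scalars
  all_goals ring1

/-- The Riccati equations satisfied by the logarithmic derivative of
`e_k + e_k'` with respect to `X`. -/
structure Soliton (d : DiffPair C) (k k' : ℝ) (Q : C) : Prop where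
  hx : d.dx Q = (algebraMap ℝ C k' - Q) * (Q - algebraMap ℝ C k)
  hy : d.dy Q = algebraMap ℝ C (k + k') * d.dx Q

variable {Q : C}

lemma Soliton.seed (hQ : Soliton d k k' Q) (hr : Roots k k' s b₁ b₂ μ) :
    Seed d (algebraMap ℝ C b₁) (algebraMap ℝ C b₂) (algebraMap ℝ C μ) 0 0 Q
      (algebraMap ℝ C (k + k') * Q - algebraMap ℝ C (k * k')) := by
  obtain ⟨rfl, rfl, rfl⟩ := hr
  constructor <;> try simp only [Derivation.map_algebraMap]
  · simp only [map_sub, Derivation.leibniz, Derivation.map_algebraMap, hQ.hy, smul_eq_mul]; ring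
  · rw [hQ.hx]; simp only [map_add, map_mul]; ring
  · simp only [map_sub, hQ.hx, Derivation.leibniz, Derivation.map_algebraMap, map_add, map_mul,
      map_neg, smul_eq_mul]; ring

lemma commutingPair_zero (d : DiffPair C) (b₁ b₂ : ℝ) :
    CommutingPair d (algebraMap ℝ C b₁) (algebraMap ℝ C b₂) 0 0 := by
  constructor <;> simp

lemma Soliton.commutingPair (hQ : Soliton d k k' Q) (hr : Roots k k' s b₁ b₂ μ) :
    CommutingPair d (algebraMap ℝ C b₁) (algebraMap ℝ C b₂) (2 * d.dx Q)
      (3 * (d.dx (d.dx Q) + d.dy Q)) := by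
  obtain ⟨rfl, rfl, rfl⟩ := hr
  obtain ⟨hx, hy⟩ := hQ
  rw [hx] at hy
  constructor <;> try simp only [Derivation.map_algebraMap]
  · simp only [hx, hy, map_add, map_sub, Derivation.leibniz, Derivation.map_algebraMap,
      Derivation.map_ofNat, map_zero, smul_eq_mul]
    ring
  · simp only [hx, hy, map_add, map_sub, map_neg, map_mul, Derivation.leibniz,
      Derivation.map_algebraMap, Derivation.map_ofNat, map_zero, smul_eq_mul]
    ring

end

section
variable {C : Type*} [CommRing C] [Algebra ℝ C] {d : DiffPair C}
    {M : Type*} [AddCommGroup M] [Module C M]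
variable {α k k' s b₁ b₂ μ : ℝ} {r t Q : C}

/-- `∂ + Q` -/
def darbouxA (E : FlatConn d M) (Q : C) (m : M) : M := E.X m + Q • m

/-- `-(∂ + k + k' - Q)(∂ + s)` -/
def darbouxC (E : FlatConn d M) (k k' s : ℝ) (Q : C) (m : M) : M :=
  -(darbouxA E (algebraMap ℝ C (k + k') - Q) (darbouxA E (algebraMap ℝ C s) m))

/-- `(∂ - s)(∂ - k - k' + Q)` -/
def darbouxB (E : FlatConn d M) (k k' s : ℝ) (Q : C) (m : M) : M :=
  darbouxA E (algebraMap ℝ C (-s)) (darbouxA E (Q - algebraMap ℝ C (k + k')) m)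

lemma Soliton.AC (hQ : Soliton d k k' Q) (hr : Roots k k' s b₁ b₂ μ) (E : FlatConn d M) (m : M) :
    (2 : C) • darbouxA E Q (darbouxC E k k' s Q m) =
      Mst E (algebraMap ℝ C b₁) (algebraMap ℝ C b₂) 0 0 m - (2 * algebraMap ℝ C μ) • m := by
  obtain ⟨rfl, rfl, rfl⟩ := hr
  simp only [darbouxA, darbouxC, Mst, map_add, map_sub, map_neg, map_mul, E.leibX, zero_smul,
    map_zero, hQ.hx, Derivation.map_algebraMap, smul_zero, add_zero, zero_add, sub_zero]
  match_scalars
  all_goals ring1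

lemma Soliton.CA (hQ : Soliton d k k' Q) (hr : Roots k k' s b₁ b₂ μ) (E : FlatConn d M) (m : M) :
    (2 : C) • darbouxC E k k' s Q (darbouxA E Q m) =
      Mst E (algebraMap ℝ C b₁) (algebraMap ℝ C b₂) (2 * d.dx Q) (3 * (d.dx (d.dx Q) + d.dy Q)) m
        - (2 * algebraMap ℝ C μ) • m := by
  obtain ⟨rfl, rfl, rfl⟩ := hr
  obtain ⟨hx, hy⟩ := hQ
  rw [hx] at hy
  simp only [darbouxA, darbouxC, Mst, map_add, map_sub, map_neg, map_mul, E.leibX, zero_smul,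
    hx, hy, Derivation.leibniz, Derivation.map_ofNat, smul_eq_mul,
    Derivation.map_algebraMap, zero_add, sub_zero]
  match_scalars
  all_goals ring1

lemma Soliton.A_Hst (hQ : Soliton d k k' Q) (E : FlatConn d M) (m : M) :
    darbouxA E Q (Hst E (2 * d.dx Q) m) = Hst E 0 (darbouxA E Q m) := by
  obtain ⟨hx, hy⟩ := hQ
  rw [hx] at hy
  simp only [darbouxA, Hst, map_add, map_sub, E.leibX, E.leibY, E.comm, zero_smul,
    hx, hy, Derivation.leibniz, Derivation.map_ofNat, smul_eq_mul,
    Derivation.map_algebraMap, add_zero, sub_zero]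
  match_scalars
  all_goals ring1

lemma Soliton.AB (hQ : Soliton d k k' Q) (hr : Roots k k' s b₁ b₂ μ) (E : FlatConn d M) (m : M) :
    (2 : C) • darbouxA E (-Q) (darbouxB E k k' s Q m) =
      Mop E (algebraMap ℝ C b₁) (algebraMap ℝ C b₂) (2 * d.dx Q) (3 * (d.dx (d.dx Q) + d.dy Q)) m
        - (2 * algebraMap ℝ C μ) • m := by
  obtain ⟨rfl, rfl, rfl⟩ := hr
  obtain ⟨hx, hy⟩ := hQ
  rw [hx] at hy
  simp only [darbouxA, darbouxB, Mop, map_add, map_sub, map_neg, map_mul, E.leibX, zero_smul,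
    hx, hy, Derivation.leibniz, smul_eq_mul,
    Derivation.map_algebraMap, add_zero, zero_add, sub_zero, neg_zero]
  match_scalars
  all_goals ring1

lemma Soliton.BA (hQ : Soliton d k k' Q) (hr : Roots k k' s b₁ b₂ μ) (E : FlatConn d M) (m : M) :
    (2 : C) • darbouxB E k k' s Q (darbouxA E (-Q) m) =
      Mop E (algebraMap ℝ C b₁) (algebraMap ℝ C b₂) 0 0 m - (2 * algebraMap ℝ C μ) • m := by
  obtain ⟨rfl, rfl, rfl⟩ := hr
  simp only [darbouxA, darbouxB, Mop, map_add, map_sub, map_neg, map_mul, E.leibX, zero_smul,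
    hQ.hx, Derivation.map_algebraMap, add_zero, sub_zero,
    Derivation.leibniz, smul_eq_mul]
  match_scalars
  all_goals ring1

lemma Soliton.B_Hop (hQ : Soliton d k k' Q) (E : FlatConn d M) (m : M) :
    darbouxB E k k' s Q (Hop E (2 * d.dx Q) m) = Hop E 0 (darbouxB E k k' s Q m) := by
  obtain ⟨hx, hy⟩ := hQ
  rw [hx] at hy
  simp only [darbouxA, darbouxB, Hop, map_add, map_sub, map_neg, E.leibX, E.leibY, E.comm,
    zero_smul, map_zero, hx, hy, Derivation.leibniz, Derivation.map_ofNat, smul_eq_mul,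
    Derivation.map_algebraMap, add_zero, zero_add, sub_zero, neg_zero]
  match_scalars
  all_goals ring1

lemma darbouxA_sub (E : FlatConn d M) (Q : C) (m n : M) :
    darbouxA E Q (m - n) = darbouxA E Q m - darbouxA E Q n := by
  simp only [darbouxA, map_sub, smul_sub]; abel

lemma darbouxA_smul (E : FlatConn d M) (Q : C) (c : ℝ) (m : M) :
    darbouxA E Q (algebraMap ℝ C c • m) = algebraMap ℝ C c • darbouxA E Q m := by
  simp only [darbouxA, E.leibX, Derivation.map_algebraMap, zero_smul, zero_add]; module

lemma darbouxA_two_smul (E : FlatConn d M) (Q : C) (m : M) :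
    darbouxA E Q ((2 : C) • m) = (2 : C) • darbouxA E Q m := by
  rw [← map_ofNat (algebraMap ℝ C) 2, darbouxA_smul]

lemma darbouxA_two_mul_smul (E : FlatConn d M) (Q : C) (c : ℝ) (m : M) :
    darbouxA E Q ((2 * algebraMap ℝ C c) • m) = (2 * algebraMap ℝ C c) • darbouxA E Q m := by
  rw [mul_smul, darbouxA_two_smul, darbouxA_smul, mul_smul]

lemma darbouxA_zero (E : FlatConn d M) (Q : C) : darbouxA E Q (0 : M) = 0 := by
  simp only [darbouxA, map_zero, smul_zero, add_zero]

lemma darbouxC_zero (E : FlatConn d M) (Q : C) : darbouxC E k k' s Q (0 : M) = 0 := by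
  simp only [darbouxC, darbouxA_zero, neg_zero]

lemma darbouxB_zero (E : FlatConn d M) (Q : C) : darbouxB E k k' s Q (0 : M) = 0 := by
  simp only [darbouxB, darbouxA_zero]

lemma darbouxB_smul (E : FlatConn d M) (Q : C) (c : ℝ) (m : M) :
    darbouxB E k k' s Q (algebraMap ℝ C c • m) = algebraMap ℝ C c • darbouxB E k k' s Q m := by
  simp only [darbouxB, darbouxA_smul]

variable {μ' : ℝ}

lemma smul_cancel {c : ℝ} (hc : c ≠ 0) {m : M} (h : algebraMap ℝ C c • m = 0) : m = 0 := by
  have h2 : algebraMap ℝ C c⁻¹ * algebraMap ℝ C c = 1 := by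
    rw [← map_mul, inv_mul_cancel₀ hc, map_one]
  rw [← one_smul C m, ← h2, mul_smul, h, smul_zero]

lemma two_smul_eq_iff {m n : M} : (2 : C) • m = n ↔ m = algebraMap ℝ C (1 / 2) • n := by
  have h2 : algebraMap ℝ C (1 / 2) * 2 = 1 := by
    rw [← map_ofNat (algebraMap ℝ C) 2, ← map_mul]; norm_num
  constructor
  · rintro rfl; rw [smul_smul, h2, one_smul]
  · rintro rfl; rw [smul_smul, mul_comm, h2, one_smul]

/-- The kernel of `M_{u₁}^* - μ'` is controlled by the Darboux image. -/
lemma Soliton.eq_zero_of_A_eq_zero (hQ : Soliton d k k' Q) (hr : Roots k k' s b₁ b₂ μ)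
    (hμ : μ' ≠ μ) (E : FlatConn d M) {m : M}
    (hm : Mst E (algebraMap ℝ C b₁) (algebraMap ℝ C b₂) (2 * d.dx Q) (3 * (d.dx (d.dx Q) + d.dy Q))
      m
        - (2 * algebraMap ℝ C μ') • m = 0) (hA : darbouxA E Q m = 0) : m = 0 := by
  have h := hQ.CA hr E m
  rw [hA, darbouxC_zero, smul_zero] at h
  refine smul_cancel (C := C) (sub_ne_zero.2 hμ) (two_smul_cancel (C := C) ?_)
  calc _ = (2 * algebraMap ℝ C μ' - 2 * algebraMap ℝ C μ) • m := by rw [map_sub]; module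
    _ = _ := by rw [sub_smul, ← sub_eq_zero.1 hm, ← h]

lemma Soliton.A_intertwines_Mst (hQ : Soliton d k k' Q) (hr : Roots k k' s b₁ b₂ μ)
    (E : FlatConn d M) (m : M) :
    darbouxA E Q (Mst E (algebraMap ℝ C b₁) (algebraMap ℝ C b₂) (2 * d.dx Q)
      (3 * (d.dx (d.dx Q) + d.dy Q)) m - (2 * algebraMap ℝ C μ') • m) =
    Mst E (algebraMap ℝ C b₁) (algebraMap ℝ C b₂) 0 0 (darbouxA E Q m)
      - (2 * algebraMap ℝ C μ') • darbouxA E Q m := by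
  have h := congrArg (darbouxA E Q) (hQ.CA hr E m)
  rw [darbouxA_two_smul, hQ.AC hr E, darbouxA_sub, darbouxA_two_mul_smul] at h
  rw [darbouxA_sub, darbouxA_two_mul_smul, sub_left_inj.1 h]

lemma Soliton.bijective (hQ : Soliton d k k' Q) (hr : Roots k k' s b₁ b₂ μ)
    (hμ : μ' ≠ μ) (E : FlatConn d M)
    (hE : Function.Bijective fun m => Mst E (algebraMap ℝ C b₁) (algebraMap ℝ C b₂) 0 0 m
      - (2 * algebraMap ℝ C μ') • m) :
    Function.Bijective fun m => Mst E (algebraMap ℝ C b₁) (algebraMap ℝ C b₂) (2 * d.dx Q)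
      (3 * (d.dx (d.dx Q) + d.dy Q)) m - (2 * algebraMap ℝ C μ') • m := by
  have hinj : ∀ m, Mst E (algebraMap ℝ C b₁) (algebraMap ℝ C b₂) (2 * d.dx Q)
      (3 * (d.dx (d.dx Q) + d.dy Q)) m - (2 * algebraMap ℝ C μ') • m = 0 → m = 0 := by
    intro m hm
    refine hQ.eq_zero_of_A_eq_zero hr hμ E hm (hE.1 ?_)
    beta_reduce
    rw [← hQ.A_intertwines_Mst hr, hm, darbouxA_zero]
    simp [Mst]
  refine ⟨fun m n hmn => sub_eq_zero.1 (hinj _ ?_), fun F => ?_⟩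
  · rw [Mst_sub, smul_sub, sub_sub_sub_comm]
    exact sub_eq_zero.2 hmn
  · obtain ⟨S', hS'⟩ := hE.2 (darbouxA E Q F)
    beta_reduce at hS'
    set S := algebraMap ℝ C (μ' - μ)⁻¹ • (darbouxC E k k' s Q S' - algebraMap ℝ C (1 / 2) • F) with
      hS
    have hν := sub_ne_zero.2 hμ
    have e2 : (2 : C) * algebraMap ℝ C (1 / 2) = 1 := by
      rw [← map_ofNat (algebraMap ℝ C) 2, ← map_mul]; norm_num
    have eν : algebraMap ℝ C (μ' - μ) * algebraMap ℝ C (μ' - μ)⁻¹ = 1 := by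
      rw [← map_mul, mul_inv_cancel₀ hν, map_one]
    have hAS : darbouxA E Q S = S' := by
      rw [hS, darbouxA_smul, darbouxA_sub, darbouxA_smul, two_smul_eq_iff.1 (hQ.AC hr E S'),
        ← hS', ← smul_sub, smul_smul]
      calc _ = ((algebraMap ℝ C (μ' - μ) * algebraMap ℝ C (μ' - μ)⁻¹)
          * (2 * algebraMap ℝ C (1 / 2))) • S' := by rw [(algebraMap ℝ C).map_sub μ']; module
        _ = S' := by rw [e2, eν]; simp
    refine ⟨S, ?_⟩
    have h := hQ.CA hr E S
    rw [hAS] at h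
    have h' : algebraMap ℝ C (μ' - μ) • S = darbouxC E k k' s Q S'
      - algebraMap ℝ C (1 / 2) • F := by
      rw [hS, smul_smul, eν, one_smul]
    calc _ = (2 : C) • darbouxC E k k' s Q S' - (2 : C) • (algebraMap ℝ C (μ' - μ) • S) := by
          rw [h, map_sub]; module
      _ = ((2 : C) * algebraMap ℝ C (1 / 2)) • F := by rw [h']; module
      _ = F := by rw [e2, one_smul]

lemma Soliton.joint_kernel_st {D : FlatConn d M} (hD : Admissible D α)
    (hQ : Soliton d k k' Q) (hr : Roots k k' s b₁ b₂ μ) {l l' s' : ℝ}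
    (hr' : Roots l l' s' b₁ b₂ μ') (hμ : μ' ≠ μ) (E : FlatConn d M)
    (hEX : ∀ m, E.X m = D.X m + (r - algebraMap ℝ C (l + l')) • m)
    (hEY : ∀ m, E.Y m = D.Y m + (algebraMap ℝ C (l + l') * r
      - algebraMap ℝ C (l * l' + l ^ 2 + l' ^ 2)) • m)
    (m : M)
    (h₁ : Mst E (algebraMap ℝ C b₁) (algebraMap ℝ C b₂) (2 * d.dx Q)
      (3 * (d.dx (d.dx Q) + d.dy Q)) m - (2 * algebraMap ℝ C μ') • m = 0)
    (h₂ : Hst E (2 * d.dx Q) m = 0) : m = 0 := by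
  refine hQ.eq_zero_of_A_eq_zero hr hμ E h₁ (hD.joint_kernel_st hr' E hEX hEY _ ?_ ?_)
  · rw [← hQ.A_intertwines_Mst hr, h₁, darbouxA_zero]
  · rw [← hQ.A_Hst, h₂, darbouxA_zero]

lemma Soliton.joint_kernel_op {D : FlatConn d M} (hD : Admissible D α)
    (hQ : Soliton d k k' Q) (hr : Roots k k' s b₁ b₂ μ) {l l' s' : ℝ}
    (hr' : Roots l l' s' b₁ b₂ μ') (hμ : μ' ≠ μ) (E : FlatConn d M)
    (hEX : ∀ m, E.X m = D.X m + r • m)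
    (hEY : ∀ m, E.Y m = D.Y m + (algebraMap ℝ C (l + l') * r - algebraMap ℝ C (l * l')) • m)
    (m : M)
    (h₁ : Mop E (algebraMap ℝ C b₁) (algebraMap ℝ C b₂) (2 * d.dx Q)
      (3 * (d.dx (d.dx Q) + d.dy Q)) m - (2 * algebraMap ℝ C μ') • m = 0)
    (h₂ : Hop E (2 * d.dx Q) m = 0) : m = 0 := by
  have h2 : (2 : C) = algebraMap ℝ C 2 := (map_ofNat _ _).symm
  have hAB := hQ.AB hr E m
  rw [sub_eq_zero] at h₁
  rw [h₁] at hAB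
  have hB : darbouxB E k k' s Q m = 0 := by
    refine hD.joint_kernel_op hr' E hEX hEY _ ?_ ?_
    · have h := hQ.BA hr E (darbouxB E k k' s Q m)
      rw [two_smul_eq_iff.1 hAB] at h
      have e : algebraMap ℝ C (1 / 2) • ((2 * algebraMap ℝ C μ') • m - (2 * algebraMap ℝ C μ) • m)
        = algebraMap ℝ C (μ' - μ) • m := by
        rw [h2, ← map_mul, ← map_mul, ← sub_smul, ← map_sub, smul_smul, ← map_mul]
        congr 2; ring
      rw [e, darbouxB_smul] at h
      rw [sub_eq_iff_eq_add.1 h.symm, map_sub]; module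
    · rw [← hQ.B_Hop, h₂, darbouxB_zero]
  rw [hB, darbouxA_zero, smul_zero] at hAB
  refine smul_cancel (C := C) (sub_ne_zero.2 hμ) (two_smul_cancel (C := C) ?_)
  calc _ = (2 * algebraMap ℝ C μ') • m - (2 * algebraMap ℝ C μ) • m := by rw [map_sub]; module
    _ = _ := hAB.symm

end

section
variable {C : Type*} [CommRing C] [Algebra ℝ C] {d : DiffPair C}
    {M : Type*} [AddCommGroup M] [Module C M]

/-- The logarithmic gradient of the weight `e_k / (e_k + e_k')` of a line soliton. -/
lemma Soliton.weight_fst {k k' : ℝ} {Q : C} (hQ : Soliton d k k' Q) {g : C} {c : ℝ}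
    (hg : g = algebraMap ℝ C c * (algebraMap ℝ C k' - Q)) :
    d.dx g = g * (algebraMap ℝ C k - Q) ∧
    d.dy g = g * (algebraMap ℝ C (k ^ 2) - (algebraMap ℝ C (k + k') * Q
      - algebraMap ℝ C (k * k'))) := by
  obtain ⟨hx, hy⟩ := hQ
  rw [hx] at hy
  subst hg
  constructor <;> simp only [Derivation.leibniz, Derivation.map_algebraMap, map_sub, hx, hy,
    smul_eq_mul, map_add, map_mul, map_pow] <;> ring

lemma Soliton.weight_snd {k k' : ℝ} {Q : C} (hQ : Soliton d k k' Q) {g : C} {c : ℝ}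
    (hg : g = algebraMap ℝ C c * (Q - algebraMap ℝ C k)) :
    d.dx g = g * (algebraMap ℝ C k' - Q) ∧
    d.dy g = g * (algebraMap ℝ C (k' ^ 2) - (algebraMap ℝ C (k + k') * Q
      - algebraMap ℝ C (k * k'))) := by
  obtain ⟨hx, hy⟩ := hQ
  rw [hx] at hy
  subst hg
  constructor <;> simp only [Derivation.leibniz, Derivation.map_algebraMap, map_sub, hx, hy,
    smul_eq_mul, map_add, map_mul, map_pow] <;> ring

lemma const_closed (d : DiffPair C) (a b : ℝ) :
    d.dx (algebraMap ℝ C b) = d.dy (algebraMap ℝ C a) := by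
  simp

lemma Soliton.closed_sub {k k' : ℝ} {Q : C} (hQ : Soliton d k k' Q) (a b : ℝ) :
    d.dx (algebraMap ℝ C (k + k') * Q - algebraMap ℝ C b) = d.dy (Q - algebraMap ℝ C a) := by
  obtain ⟨hx, hy⟩ := hQ
  simp only [Derivation.leibniz, Derivation.map_algebraMap, map_sub, hy, smul_eq_mul]; ring

variable {α κ₁ κ₂ κ₃ κ₄ s s' b₁ b₂ μ₁ μ₂ : ℝ} {Q q₀ h H : C}

/-- The Darboux transformation from the vacuum to a line soliton. -/
lemma Soliton.first_step {D : FlatConn d M} (hD : Admissible D α) (hα : α ≠ 0)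
    (hQ : Soliton d κ₂ κ₃ Q) (hr : Roots κ₂ κ₃ s' b₁ b₂ μ₂) (h23 : κ₂ ≠ κ₃)
    (n1 : κ₃ - κ₂ ≠ α) (n2 : κ₂ - κ₃ ≠ α) (n3 : s' - κ₂ ≠ α) (n4 : s' - κ₃ ≠ α)
    (hvac : ∀ m, Ast D (algebraMap ℝ C b₁) (algebraMap ℝ C b₂) 0 m = 0 → m = 0) (W : M)
    (hW : Ast D (algebraMap ℝ C b₁) (algebraMap ℝ C b₂) (2 * d.dx Q) W = 0) : W = 0 := by
  have hS := hQ.seed hr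
  have hc : algebraMap ℝ C (κ₃ - κ₂)⁻¹ * algebraMap ℝ C (κ₃ - κ₂) = 1 := by
    rw [← map_mul, inv_mul_cancel₀ (sub_ne_zero.2 h23.symm), map_one]
  obtain ⟨g2x, g2y⟩ := hQ.weight_fst (c := (κ₃ - κ₂)⁻¹) rfl
  obtain ⟨g3x, g3y⟩ := hQ.weight_snd (c := (κ₃ - κ₂)⁻¹) rfl
  have hAB : (1 : C) * (algebraMap ℝ C (κ₃ - κ₂)⁻¹ * (algebraMap ℝ C κ₃ - Q))
      + 1 * (algebraMap ℝ C (κ₃ - κ₂)⁻¹ * (Q - algebraMap ℝ C κ₂)) = 1 := by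
    rw [map_sub] at hc; linear_combination hc
  set g₂ := algebraMap ℝ C (κ₃ - κ₂)⁻¹ * (algebraMap ℝ C κ₃ - Q)
  set g₃ := algebraMap ℝ C (κ₃ - κ₂)⁻¹ * (Q - algebraMap ℝ C κ₂)
  have hX : Function.Bijective D.X := by
    convert hD.bij 0 (by simpa using hα) using 2 with m
    simp
  obtain ⟨R, hR, hR'⟩ := hS.step (commutingPair_zero d b₁ b₂) D
    (D.gauge (algebraMap ℝ C (-κ₂)) (algebraMap ℝ C (-κ₂ ^ 2)) (const_closed d _ _))
    (D.gauge (algebraMap ℝ C (-κ₃)) (algebraMap ℝ C (-κ₃ ^ 2)) (const_closed d _ _))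
    (D.gauge _ _ (hQ.closed_sub (κ₂ + κ₃) (κ₂ * κ₃ + κ₂ ^ 2 + κ₃ ^ 2))) hX W
    (by simpa using hW) (g₁ := g₂) (g₂ := g₃) (k₁ := g₂) (k₂ := g₃) (A := 1) (B := 1) (H := 1)
    (D.intertwines_gauge _ _ (by rw [g2x, map_neg]; ring)
      (by rw [g2y, map_neg]; ring))
    (D.intertwines_gauge _ _ (by rw [g3x, map_neg]; ring)
      (by rw [g3y, map_neg]; ring))
    (D.intertwines_gauge _ _ (by rw [g3x, map_neg, map_add]; ring)
      (by rw [g3y, map_neg]; simp only [map_add]; ring))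
    (D.intertwines_gauge _ _ (by rw [g2x, map_neg, map_add]; ring)
      (by rw [g2y, map_neg]; simp only [map_add]; ring))
    (by ring) (by ring) hAB
    (hD.vacuum_bijective hr (κ := κ₂) (fun m => by rw [FlatConn.gauge_X, map_neg]; module)
      (by simpa using hα.symm) n1 n3)
    (hD.vacuum_bijective hr (κ := κ₃) (fun m => by rw [FlatConn.gauge_X, map_neg]; module)
      n2 (by simpa using hα.symm) n4)
    (fun m h₁ h₂ => hD.joint_kernel_st (r := Q) hr _ (fun m => rfl) (fun m => rfl) m h₁ h₂)
  have h0 := hvac _ hR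
  obtain ⟨e1, e2⟩ := hR' h0
  have : R = 0 := hD.joint_kernel_op (r := Q) hr _ (fun m => rfl) (fun m => rfl) R e2 e1
  simpa [this] using h0

/-- `h` is the quotient of the two-soliton `τ`-function by those of its line solitons, with
inverse `H`. -/
structure Dressing (d : DiffPair C) (κ₁ κ₄ : ℝ) (Q q₀ h H : C) : Prop where
  hh : h = algebraMap ℝ C (κ₄ - κ₁)⁻¹ * ((Q - algebraMap ℝ C κ₁) * (algebraMap ℝ C κ₄ - q₀)
    + (algebraMap ℝ C κ₄ - Q) * (q₀ - algebraMap ℝ C κ₁))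
  hH : H * h = 1

lemma Dressing.seed (hh : Dressing d κ₁ κ₄ Q q₀ h H) (hQ : Soliton d κ₂ κ₃ Q)
    (hq₀ : Soliton d κ₁ κ₄ q₀) (hr' : Roots κ₂ κ₃ s' b₁ b₂ μ₂) (hr : Roots κ₁ κ₄ s b₁ b₂ μ₁) :
    Seed d (algebraMap ℝ C b₁) (algebraMap ℝ C b₂) (algebraMap ℝ C μ₁) (2 * d.dx Q)
      (3 * (d.dx (d.dx Q) + d.dy Q)) (d.dx h * H + q₀)
      (d.dy h * H + (algebraMap ℝ C (κ₁ + κ₄) * q₀ - algebraMap ℝ C (κ₁ * κ₄))) := by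
  have hH := hh.hH
  have h1 : h * H = 1 := by rw [mul_comm, hH]
  have hHx : d.dx H = - H * H * d.dx h := by
    have := congrArg d.dx hH
    simp only [Derivation.leibniz, smul_eq_mul, Derivation.map_one_eq_zero] at this
    linear_combination H * this - d.dx H * hH
  have hHy : d.dy H = - H * H * d.dy h := by
    have := congrArg d.dy hH
    simp only [Derivation.leibniz, smul_eq_mul, Derivation.map_one_eq_zero] at this
    linear_combination H * this - d.dy H * hH
  have hqx := hq₀.hx
  have hqy := hq₀.hy
  have hQx := hQ.hx
  have hQy := hQ.hy
  have hb : algebraMap ℝ C b₁ = - (algebraMap ℝ C κ₂ * algebraMap ℝ C κ₃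
    + algebraMap ℝ C s' * (algebraMap ℝ C κ₂ + algebraMap ℝ C κ₃)) := by
    rw [hr'.hb₁]; simp only [map_add, map_mul, map_neg]
  have hb' : algebraMap ℝ C b₁ = - (algebraMap ℝ C κ₁ * algebraMap ℝ C κ₄
    + algebraMap ℝ C s * (algebraMap ℝ C κ₁ + algebraMap ℝ C κ₄)) := by
    rw [hr.hb₁]; simp only [map_add, map_mul, map_neg]
  have hbb : algebraMap ℝ C b₂ = algebraMap ℝ C κ₂ + algebraMap ℝ C κ₃ + algebraMap ℝ C s' := by
    rw [hr'.hb₂]; simp only [map_add]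
  have hbb' : algebraMap ℝ C b₂ = algebraMap ℝ C κ₁ + algebraMap ℝ C κ₄ + algebraMap ℝ C s := by
    rw [hr.hb₂]; simp only [map_add]
  have hμ : algebraMap ℝ C μ₁ = algebraMap ℝ C κ₁ * algebraMap ℝ C κ₄ * algebraMap ℝ C s := by
    rw [hr.hμ]; simp only [map_mul]
  rw [map_add] at hqy hQy
  rw [hqx] at hqy
  rw [hQx] at hQy
  have heat : d.dy h = d.dx (d.dx h) + 2 * d.dx h * q₀ + 2 * d.dx Q * h := by
    simp only [hh.hh, Derivation.leibniz, Derivation.map_algebraMap, map_sub, map_add, smul_eq_mul,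
      hQx, hQy, hqx, hqy, map_zero]
    ring
  have spec : 2 * (d.dx (d.dx (d.dx h)) + 3 * d.dx (d.dx h) * q₀ + 3 * d.dx h * (d.dx q₀ + q₀ * q₀)
      + h * (d.dx (d.dx q₀) + 3 * q₀ * d.dx q₀ + q₀ * q₀ * q₀))
        + 3 * (2 * d.dx Q) * (d.dx h + h * q₀)
      + 3 * (d.dx (d.dx Q) + d.dy Q) * h - 2 * algebraMap ℝ C b₁ * (d.dx h + h * q₀)
      - 2 * algebraMap ℝ C b₂ * (d.dy h + h * (algebraMap ℝ C (κ₁ + κ₄) * q₀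
        - algebraMap ℝ C (κ₁ * κ₄)))
      = 2 * algebraMap ℝ C μ₁ * h := by
    have e1 : algebraMap ℝ C s' = algebraMap ℝ C κ₁ + algebraMap ℝ C κ₄ + algebraMap ℝ C s
      - algebraMap ℝ C κ₂ - algebraMap ℝ C κ₃ := by
      linear_combination hbb' - hbb
    rw [hb', e1] at hb
    simp only [hh.hh, Derivation.leibniz, Derivation.map_algebraMap, map_sub, map_add, map_mul,
      smul_eq_mul, hQx, hQy, hqx, hqy, map_zero, hb', hbb', hμ]
    linear_combination (-2 * algebraMap ℝ C (κ₄ - κ₁)⁻¹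
      * ((algebraMap ℝ C κ₃ - Q) * (Q - algebraMap ℝ C κ₂)) * (algebraMap ℝ C κ₁ + algebraMap ℝ C κ₄
      - 2 * q₀)) * hb
  constructor <;> try simp only [Derivation.map_algebraMap]
  · simp only [map_add, map_sub, Derivation.leibniz, smul_eq_mul, Derivation.map_algebraMap, hHx,
      hHy, hqx, hqy, d.comm]
    ring
  · simp only [map_add, map_mul, Derivation.leibniz, smul_eq_mul, hHx, heat, hqx]
    linear_combination (-2 * d.dx Q) * h1
  · simp only [map_add, map_neg, map_mul (algebraMap ℝ C), Derivation.leibniz, smul_eq_mul, hHx]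
    simp only [map_add, map_mul] at spec
    linear_combination H * spec - (2 * (d.dx (d.dx q₀) + 3 * q₀ * d.dx q₀ + q₀ * q₀ * q₀)
      + 6 * d.dx Q * q₀
      + 3 * (d.dx (d.dx Q) + d.dy Q) - 2 * algebraMap ℝ C b₁ * q₀
      - 2 * algebraMap ℝ C b₂ * ((algebraMap ℝ C κ₁ + algebraMap ℝ C κ₄) * q₀
        - algebraMap ℝ C κ₁ * algebraMap ℝ C κ₄) - 2 * algebraMap ℝ C μ₁) * h1

lemma Dressing.second_step {D : FlatConn d M} (hD : Admissible D α) (hα : α ≠ 0)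
    (hh : Dressing d κ₁ κ₄ Q q₀ h H) (hQ : Soliton d κ₂ κ₃ Q)
    (hq₀ : Soliton d κ₁ κ₄ q₀) (hr' : Roots κ₂ κ₃ s' b₁ b₂ μ₂) (hr : Roots κ₁ κ₄ s b₁ b₂ μ₁)
    (hμ : μ₁ ≠ μ₂) (n1 : κ₄ - κ₁ ≠ α) (n2 : κ₁ - κ₄ ≠ α) (n3 : s - κ₁ ≠ α) (n4 : s - κ₄ ≠ α)
    (hone : ∀ m, Ast D (algebraMap ℝ C b₁) (algebraMap ℝ C b₂) (2 * d.dx Q) m = 0 → m = 0) (W : M)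
    (hW : Ast D (algebraMap ℝ C b₁) (algebraMap ℝ C b₂) (2 * d.dx Q + 2 * d.dx (d.dx h * H + q₀)) W
      = 0) :
    W = 0 := by
  have hS := hh.seed hQ hq₀ hr' hr
  have hH := hh.hH
  have hHx : d.dx H = - H * H * d.dx h := by
    have := congrArg d.dx hH
    simp only [Derivation.leibniz, smul_eq_mul, Derivation.map_one_eq_zero] at this
    linear_combination H * this - d.dx H * hH
  have hHy : d.dy H = - H * H * d.dy h := by
    have := congrArg d.dy hH
    simp only [Derivation.leibniz, smul_eq_mul, Derivation.map_one_eq_zero] at this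
    linear_combination H * this - d.dy H * hH
  obtain ⟨k1x, k1y⟩ := hq₀.weight_fst (c := (κ₄ - κ₁)⁻¹) rfl
  obtain ⟨k4x, k4y⟩ := hq₀.weight_snd (c := (κ₄ - κ₁)⁻¹) rfl
  have hAB : (Q - algebraMap ℝ C κ₁) * (H * (algebraMap ℝ C (κ₄ - κ₁)⁻¹ * (algebraMap ℝ C κ₄ - q₀)))
      + (algebraMap ℝ C κ₄ - Q) * (H * (algebraMap ℝ C (κ₄ - κ₁)⁻¹ * (q₀ - algebraMap ℝ C κ₁))) =
        1 := by
    rw [hh.hh] at hH; linear_combination hH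
  set k₁ := algebraMap ℝ C (κ₄ - κ₁)⁻¹ * (algebraMap ℝ C κ₄ - q₀)
  set k₄ := algebraMap ℝ C (κ₄ - κ₁)⁻¹ * (q₀ - algebraMap ℝ C κ₁)
  have hX : Function.Bijective D.X := by
    convert hD.bij 0 (by simpa using hα) using 2 with m
    simp
  obtain ⟨R, hR, hR'⟩ := hS.step (hQ.commutingPair hr') D
    (D.gauge (algebraMap ℝ C (-κ₁)) (algebraMap ℝ C (-κ₁ ^ 2)) (const_closed d _ _))
    (D.gauge (algebraMap ℝ C (-κ₄)) (algebraMap ℝ C (-κ₄ ^ 2)) (const_closed d _ _))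
    (D.gauge _ _ (hq₀.closed_sub (κ₁ + κ₄) (κ₁ * κ₄ + κ₁ ^ 2 + κ₄ ^ 2))) hX W
    hW (g₁ := H * k₁) (g₂ := H * k₄) (k₁ := k₁) (k₂ := k₄) (H := H)
    (D.intertwines_gauge _ _
      (by simp only [Derivation.leibniz, smul_eq_mul, k1x, hHx, map_neg]; ring)
      (by simp only [Derivation.leibniz, smul_eq_mul, k1y, hHy, map_neg]; ring))
    (D.intertwines_gauge _ _
      (by simp only [Derivation.leibniz, smul_eq_mul, k4x, hHx, map_neg]; ring)
      (by simp only [Derivation.leibniz, smul_eq_mul, k4y, hHy, map_neg]; ring))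
    (D.intertwines_gauge _ _ (by rw [k4x, map_neg, map_add]; ring)
      (by rw [k4y, map_neg]; simp only [map_add]; ring))
    (D.intertwines_gauge _ _ (by rw [k1x, map_neg, map_add]; ring)
      (by rw [k1y, map_neg]; simp only [map_add]; ring))
    rfl rfl hAB
    (hQ.bijective hr' hμ _ (hD.vacuum_bijective hr (κ := κ₁)
      (fun m => by rw [FlatConn.gauge_X, map_neg]; module) (by simpa using hα.symm) n1 n3))
    (hQ.bijective hr' hμ _ (hD.vacuum_bijective hr (κ := κ₄)
      (fun m => by rw [FlatConn.gauge_X, map_neg]; module) n2 (by simpa using hα.symm) n4))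
    (fun m h₁ h₂ => hQ.joint_kernel_st hD hr' (r := q₀) hr hμ _ (fun m => rfl) (fun m => rfl) m h₁
      h₂)
  have h0 := hone _ hR
  obtain ⟨e1, e2⟩ := hR' h0
  have hi : Intertwines h (D.gauge _ _ hS.hj)
      (D.gauge q₀ (algebraMap ℝ C (κ₁ + κ₄) * q₀ - algebraMap ℝ C (κ₁ * κ₄)) (hq₀.seed hr).hj) :=
    D.intertwines_gauge _ _ (by linear_combination (-d.dx h) * hH)
      (by linear_combination (-d.dy h) * hH)
  have hz : h • R = 0 := by
    refine hQ.joint_kernel_op hD hr' (r := q₀) hr hμ (D.gauge q₀ (algebraMap ℝ C (κ₁ + κ₄) * q₀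
      - algebraMap ℝ C (κ₁ * κ₄)) (hq₀.seed hr).hj) (fun m => rfl) (fun m => rfl) _ ?_ ?_
    · rw [hi.Mop, smul_comm _ h, ← smul_sub, e2, smul_zero]
    · rw [hi.Hop, e1, smul_zero]
  have : R = 0 := by rw [← one_smul C R, ← hH, mul_smul, hz, smul_zero]
  simpa [this] using h0

end

section

/-- The directional derivative of a real function on the plane. -/
noncomputable def dirDeriv (v : ℂ) (f : ℂ → ℝ) (z : ℂ) : ℝ := fderiv ℝ f z v

/-- `f` and its partial derivatives up to order `n` exist and are bounded. -/
def BddSmooth : ℕ → (ℂ → ℝ) → Prop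
  | 0, f => ∃ K, ∀ z, |f z| ≤ K
  | n + 1, f => (∃ K, ∀ z, |f z| ≤ K) ∧ Differentiable ℝ f ∧
      BddSmooth n (dirDeriv 1 f) ∧ BddSmooth n (dirDeriv Complex.I f)

lemma BddSmooth.bdd {n : ℕ} {f : ℂ → ℝ} (h : BddSmooth n f) : ∃ K, ∀ z, |f z| ≤ K := by
  cases n with
  | zero => exact h
  | succ n => exact h.1

lemma BddSmooth.pred {n : ℕ} {f : ℂ → ℝ} (h : BddSmooth (n + 1) f) : BddSmooth n f := by
  induction n generalizing f with
  | zero => exact h.1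
  | succ n ih => exact ⟨h.1, h.2.1, ih h.2.2.1, ih h.2.2.2⟩

lemma dirDeriv_add {f g : ℂ → ℝ} (hf : Differentiable ℝ f) (hg : Differentiable ℝ g) (v : ℂ) :
    dirDeriv v (f + g) = dirDeriv v f + dirDeriv v g := by
  ext z; simp [dirDeriv, fderiv_add (hf z) (hg z)]

lemma dirDeriv_mul {f g : ℂ → ℝ} (hf : Differentiable ℝ f) (hg : Differentiable ℝ g) (v : ℂ) :
    dirDeriv v (f * g) = f * dirDeriv v g + g * dirDeriv v f := by
  ext z; simp [dirDeriv, fderiv_mul (hf z) (hg z)]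

lemma dirDeriv_const (c : ℝ) (v : ℂ) : dirDeriv v (fun _ => c) = fun _ => 0 := by
  ext z; simp [dirDeriv]

lemma BddSmooth.const (c : ℝ) (n : ℕ) : BddSmooth n fun _ => c := by
  induction n generalizing c with
  | zero => exact ⟨|c|, fun _ => le_rfl⟩
  | succ n ih =>
    refine ⟨⟨|c|, fun _ => le_rfl⟩, differentiable_const c, ?_, ?_⟩ <;>
    · rw [dirDeriv_const]; exact ih 0

lemma BddSmooth.add {n : ℕ} {f g : ℂ → ℝ} (hf : BddSmooth n f) (hg : BddSmooth n g) :
    BddSmooth n (f + g) := by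
  have hb : ∃ K, ∀ z, |(f + g) z| ≤ K := by
    obtain ⟨K, hK⟩ := hf.bdd
    obtain ⟨L, hL⟩ := hg.bdd
    exact ⟨K + L, fun z => (abs_add_le _ _).trans (add_le_add (hK z) (hL z))⟩
  induction n generalizing f g with
  | zero => exact hb
  | succ n ih =>
    refine ⟨hb, hf.2.1.add hg.2.1, ?_, ?_⟩ <;> rw [dirDeriv_add hf.2.1 hg.2.1]
    · exact ih hf.2.2.1 hg.2.2.1 (by simpa using (hf.2.2.1.bdd.elim fun K hK => hg.2.2.1.bdd.elim
        fun L hL => ⟨K + L, fun z => (abs_add_le _ _).trans (add_le_add (hK z) (hL z))⟩))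
    · exact ih hf.2.2.2 hg.2.2.2 (by simpa using (hf.2.2.2.bdd.elim fun K hK => hg.2.2.2.bdd.elim
        fun L hL => ⟨K + L, fun z => (abs_add_le _ _).trans (add_le_add (hK z) (hL z))⟩))

lemma BddSmooth.mul {n : ℕ} {f g : ℂ → ℝ} (hf : BddSmooth n f) (hg : BddSmooth n g) :
    BddSmooth n (f * g) := by
  have hb : ∀ {f g : ℂ → ℝ}, (∃ K, ∀ z, |f z| ≤ K) → (∃ K, ∀ z, |g z| ≤ K) →
      ∃ K, ∀ z, |(f * g) z| ≤ K := by
    rintro f g ⟨K, hK⟩ ⟨L, hL⟩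
    exact ⟨K * L, fun z => by
      rw [Pi.mul_apply, abs_mul]
      exact mul_le_mul (hK z) (hL z) (abs_nonneg _) ((abs_nonneg _).trans (hK z))⟩
  induction n generalizing f g with
  | zero => exact hb hf hg
  | succ n ih =>
    refine ⟨hb hf.1 hg.1, hf.2.1.mul hg.2.1, ?_, ?_⟩ <;> rw [dirDeriv_mul hf.2.1 hg.2.1]
    · exact (ih hf.pred hg.2.2.1).add (ih hg.pred hf.2.2.1)
    · exact (ih hf.pred hg.2.2.2).add (ih hg.pred hf.2.2.2)

/-- The algebra of smooth functions on the plane bounded together with all derivatives. -/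
def bddSmooth : Subalgebra ℝ (ℂ → ℝ) where
  carrier := {f | ∀ n, BddSmooth n f}
  mul_mem' hf hg n := (hf n).mul (hg n)
  add_mem' hf hg n := (hf n).add (hg n)
  algebraMap_mem' c n := BddSmooth.const c n

lemma bddSmooth.differentiable {f : ℂ → ℝ} (hf : f ∈ bddSmooth) : Differentiable ℝ f :=
  (hf 1).2.1

lemma bddSmooth.dirDeriv_one {f : ℂ → ℝ} (hf : f ∈ bddSmooth) : dirDeriv 1 f ∈ bddSmooth :=
  fun n => (hf (n + 1)).2.2.1

lemma bddSmooth.dirDeriv_I {f : ℂ → ℝ} (hf : f ∈ bddSmooth) :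
    dirDeriv Complex.I f ∈ bddSmooth :=
  fun n => (hf (n + 1)).2.2.2

/-- A bounded function whose partial derivatives are as regular as itself lies in `bddSmooth`. -/
lemma bddSmooth.mem_of_deriv {f : ℂ → ℝ} (hb : ∃ K, ∀ z, |f z| ≤ K) (hf : Differentiable ℝ f)
    (h₁ : ∀ n, BddSmooth n f → BddSmooth n (dirDeriv 1 f))
    (h₂ : ∀ n, BddSmooth n f → BddSmooth n (dirDeriv Complex.I f)) : f ∈ bddSmooth := by
  intro n
  induction n with
  | zero => exact hb
  | succ n ih => exact ⟨hb, hf, h₁ n ih, h₂ n ih⟩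

lemma bddSmooth.inv_mem {f : ℂ → ℝ} (hf : f ∈ bddSmooth) {c : ℝ} (hc : 0 < c)
    (hcf : ∀ z, c ≤ f z) : f⁻¹ ∈ bddSmooth := by
  have h0 : ∀ z, f z ≠ 0 := fun z => (hc.trans_le (hcf z)).ne'
  have hd := bddSmooth.differentiable hf
  have hv : ∀ v, dirDeriv v f⁻¹ = (fun _ => -1) * (f⁻¹ * f⁻¹ * dirDeriv v f) := by
    intro v
    ext z
    have := ((hasDerivAt_inv (h0 z)).comp_hasFDerivAt z (hd z).hasFDerivAt).fderiv
    change fderiv ℝ f⁻¹ z = _ at this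
    simp only [dirDeriv, Pi.mul_apply, Pi.inv_apply, this]
    simp only [smul_apply, smul_eq_mul]
    ring
  refine mem_of_deriv ⟨c⁻¹, fun z => ?_⟩ (hd.inv h0) ?_ ?_
  · rw [Pi.inv_apply, abs_inv, abs_of_pos (hc.trans_le (hcf z))]
    exact inv_anti₀ hc (hcf z)
  · intro n hn
    rw [hv]
    exact (BddSmooth.const _ n).mul ((hn.mul hn).mul (dirDeriv_one hf n))
  · intro n hn
    rw [hv]
    exact (BddSmooth.const _ n).mul ((hn.mul hn).mul (dirDeriv_I hf n))

lemma fderiv_eq_dirDeriv (f : ℂ → ℝ) (z : ℂ) :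
    fderiv ℝ f z = dirDeriv 1 f z • Complex.reCLM + dirDeriv Complex.I f z • Complex.imCLM := by
  ext v
  have : v = v.re • (1 : ℂ) + v.im • Complex.I := by simp
  conv_lhs => rw [this]
  rw [map_add, map_smul, map_smul]
  simp [dirDeriv, mul_comm]

lemma bddSmooth.contDiff {f : ℂ → ℝ} (hf : f ∈ bddSmooth) : ContDiff ℝ (⊤ : ℕ∞) f := by
  rw [contDiff_infty]
  intro n
  induction n generalizing f with
  | zero => exact contDiff_zero.2 (differentiable hf).continuous
  | succ n ih =>
    rw [Nat.cast_succ, contDiff_succ_iff_fderiv]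
    refine ⟨differentiable hf, by simp, ?_⟩
    rw [funext (fderiv_eq_dirDeriv f)]
    exact ((ih (dirDeriv_one hf)).smul contDiff_const).add
      ((ih (dirDeriv_I hf)).smul contDiff_const)

lemma bddSmooth.bdd_iteratedFDeriv {f : ℂ → ℝ} (hf : f ∈ bddSmooth) (n : ℕ) :
    ∃ K, ∀ z, ‖iteratedFDeriv ℝ n f z‖ ≤ K := by
  induction n generalizing f with
  | zero => simpa using (hf 0).bdd
  | succ n ih =>
    obtain ⟨K, hK⟩ := ih (dirDeriv_one hf)
    obtain ⟨L, hL⟩ := ih (dirDeriv_I hf)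
    set A := ContinuousLinearMap.toSpanSingleton ℝ Complex.reCLM
    set B := ContinuousLinearMap.toSpanSingleton ℝ Complex.imCLM
    have h1 : ContDiff ℝ n (dirDeriv 1 f) := contDiff_infty.1 (contDiff (dirDeriv_one hf)) n
    have h2 : ContDiff ℝ n (dirDeriv Complex.I f) :=
      contDiff_infty.1 (contDiff (dirDeriv_I hf)) n
    refine ⟨‖A‖ * K + ‖B‖ * L, fun z => ?_⟩
    have e : fderiv ℝ f = A ∘ dirDeriv 1 f + B ∘ dirDeriv Complex.I f := by
      ext1 z; rw [fderiv_eq_dirDeriv]; rfl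
    rw [← norm_iteratedFDeriv_fderiv, e,
      iteratedFDeriv_add (A.contDiff.comp h1) (B.contDiff.comp h2)]
    refine (norm_add_le _ _).trans (add_le_add ?_ ?_)
    · exact (A.norm_iteratedFDeriv_comp_left h1.contDiffAt le_rfl).trans
        (mul_le_mul_of_nonneg_left (hK z) (norm_nonneg _))
    · exact (B.norm_iteratedFDeriv_comp_left h2.contDiffAt le_rfl).trans
        (mul_le_mul_of_nonneg_left (hL z) (norm_nonneg _))

lemma bddSmooth.hasTemperateGrowth {f : ℂ → ℝ} (hf : f ∈ bddSmooth) :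
    f.HasTemperateGrowth := by
  refine ⟨contDiff hf, fun n => ?_⟩
  obtain ⟨K, hK⟩ := bdd_iteratedFDeriv hf n
  exact ⟨0, K, fun z => by simpa using hK z⟩

lemma bddSmooth.hasTemperateGrowth_ofReal {f : ℂ → ℝ} (hf : f ∈ bddSmooth) :
    (fun z => (f z : ℂ)).HasTemperateGrowth :=
  Function.HasTemperateGrowth.comp Function.Complex.hasTemperateGrowth_ofReal
    (hasTemperateGrowth hf)

lemma dirDeriv_comm {f : ℂ → ℝ} (hf : f ∈ bddSmooth) (v w : ℂ) :
    dirDeriv v (dirDeriv w f) = dirDeriv w (dirDeriv v f) := by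
  have h2 : ContDiff ℝ 2 f := contDiff_infty.1 (bddSmooth.contDiff hf) 2
  have hd : Differentiable ℝ (fderiv ℝ f) := (h2.fderiv_right (m := 1) (by norm_num)).differentiable
    (by norm_num)
  ext z
  have e : ∀ v w, dirDeriv v (dirDeriv w f) z = fderiv ℝ (fderiv ℝ f) z v w := by
    intro v w
    simp only [dirDeriv]
    change fderiv ℝ (fun z => fderiv ℝ f z w) z v = _
    rw [fderiv_clm_apply (hd z) (differentiableAt_const w)]
    simp
  rw [e, e]
  exact (h2.contDiffAt.isSymmSndFDerivAt (by simp)) v w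

/-- The derivation `∂_v` of the coefficient algebra. -/
noncomputable def dirDerivation (v : ℂ) (h : ∀ f ∈ bddSmooth, dirDeriv v f ∈ bddSmooth) :
    Derivation ℝ bddSmooth bddSmooth :=
  Derivation.mk'
    { toFun := fun f => ⟨dirDeriv v f, h f f.2⟩
      map_add' := fun f g => Subtype.ext
        (dirDeriv_add (bddSmooth.differentiable f.2) (bddSmooth.differentiable g.2) v)
      map_smul' := fun c f => Subtype.ext (by
        ext z
        simp [dirDeriv, fderiv_const_smul (bddSmooth.differentiable f.2 z)]) }
    fun f g => Subtype.ext
      (dirDeriv_mul (bddSmooth.differentiable f.2) (bddSmooth.differentiable g.2) v)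

/-- The two partial derivatives on the coefficient algebra. -/
noncomputable def planeDiff : DiffPair bddSmooth where
  dx := dirDerivation 1 fun _ => bddSmooth.dirDeriv_one
  dy := dirDerivation Complex.I fun _ => bddSmooth.dirDeriv_I
  comm f := Subtype.ext (dirDeriv_comm f.2 _ _)

end

section

open scoped SchwartzMap LineDeriv FourierTransform

/-- The `L²` norm of a Schwartz function. -/
noncomputable def l2 (φ : 𝓢(ℂ, ℂ)) : ℝ := ‖φ.toLp 2 volume‖

lemma l2_nonneg (φ : 𝓢(ℂ, ℂ)) : 0 ≤ l2 φ := norm_nonneg _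

lemma l2_add_le (φ ψ : 𝓢(ℂ, ℂ)) : l2 (φ + ψ) ≤ l2 φ + l2 ψ :=
  norm_add_le (φ.toLp 2 volume) (ψ.toLp 2 volume)

lemma l2_le_of_le {φ ψ : 𝓢(ℂ, ℂ)} {K : ℝ} (h : ∀ z, ‖φ z‖ ≤ K * ‖ψ z‖) : l2 φ ≤ K * l2 ψ := by
  refine Lp.norm_le_mul_norm_of_ae_le_mul ?_
  filter_upwards [φ.coeFn_toLp 2 volume, ψ.coeFn_toLp 2 volume] with z h₁ h₂
  rw [h₁, h₂]
  exact h z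

lemma l2_smul (c : ℂ) (φ : 𝓢(ℂ, ℂ)) : l2 (c • φ) = ‖c‖ * l2 φ :=
  norm_smul c (φ.toLp 2 volume)

lemma l2_fourier (φ : 𝓢(ℂ, ℂ)) : l2 (𝓕 φ) = l2 φ := SchwartzMap.norm_fourier_toL2_eq φ

/-- The directional derivative on Schwartz functions. -/
noncomputable def pd (v : ℂ) : 𝓢(ℂ, ℂ) →ₗ[ℂ] 𝓢(ℂ, ℂ) :=
  (LineDeriv.lineDerivOpCLM ℂ 𝓢(ℂ, ℂ) v : 𝓢(ℂ, ℂ) →ₗ[ℂ] 𝓢(ℂ, ℂ))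

lemma pd_apply (v : ℂ) (φ : 𝓢(ℂ, ℂ)) (z : ℂ) : pd v φ z = fderiv ℝ φ z v := rfl

lemma pd_comm (v w : ℂ) (φ : 𝓢(ℂ, ℂ)) : pd v (pd w φ) = pd w (pd v φ) := by
  have h2 : ContDiff ℝ 2 φ := φ.smooth 2
  have hd : Differentiable ℝ (fderiv ℝ φ) :=
    (h2.fderiv_right (m := 1) (by norm_num)).differentiable (by norm_num)
  ext z
  have e : ∀ v w, pd v (pd w φ) z = fderiv ℝ (fderiv ℝ φ) z v w := by
    intro v w
    change fderiv ℝ (fun z => fderiv ℝ φ z w) z v = _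
    rw [fderiv_clm_apply (hd z) (differentiableAt_const w)]
    simp
  rw [e, e]
  exact (h2.contDiffAt.isSymmSndFDerivAt (by simp)) v w

/-- Multiplication of Schwartz functions by a coefficient. -/
noncomputable def mulT (g : bddSmooth) : 𝓢(ℂ, ℂ) →ₗ[ℂ] 𝓢(ℂ, ℂ) :=
  (SchwartzMap.smulLeftCLM ℂ (fun z => ((g : ℂ → ℝ) z : ℂ)) : 𝓢(ℂ, ℂ) →ₗ[ℂ] 𝓢(ℂ, ℂ))

lemma mulT_apply (g : bddSmooth) (φ : 𝓢(ℂ, ℂ)) (z : ℂ) :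
    mulT g φ z = ((g : ℂ → ℝ) z : ℂ) * φ z :=
  SchwartzMap.smulLeftCLM_apply_apply (bddSmooth.hasTemperateGrowth_ofReal g.2) φ z

lemma mulT_add (g h : bddSmooth) (φ : 𝓢(ℂ, ℂ)) : mulT (g + h) φ = mulT g φ + mulT h φ := by
  ext z; simp [mulT_apply, add_mul]

lemma mulT_mul (g h : bddSmooth) (φ : 𝓢(ℂ, ℂ)) : mulT (g * h) φ = mulT g (mulT h φ) := by
  ext z; simp [mulT_apply, mul_assoc]

lemma mulT_algebraMap (c : ℝ) (φ : 𝓢(ℂ, ℂ)) :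
    mulT (algebraMap ℝ bddSmooth c) φ = (c : ℂ) • φ := by
  ext z; rw [mulT_apply]; rfl

lemma mulT_one (φ : 𝓢(ℂ, ℂ)) : mulT 1 φ = φ := by
  ext z; simp [mulT_apply]

lemma mulT_zero (φ : 𝓢(ℂ, ℂ)) : mulT 0 φ = 0 := by
  ext z; simp [mulT_apply]

lemma pd_mulT (v : ℂ) (g : bddSmooth) (hv : dirDeriv v g ∈ bddSmooth) (φ : 𝓢(ℂ, ℂ)) :
    pd v (mulT g φ) = mulT ⟨dirDeriv v g, hv⟩ φ + mulT g (pd v φ) := by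
  ext z
  have e : ⇑(mulT g φ) = fun z => ((g : ℂ → ℝ) z : ℂ) * φ z := funext (mulT_apply g φ)
  have hg : HasFDerivAt (fun z => ((g : ℂ → ℝ) z : ℂ)) (Complex.ofRealCLM.comp (fderiv ℝ g z)) z :=
    Complex.ofRealCLM.hasFDerivAt.comp z (bddSmooth.differentiable g.2 z).hasFDerivAt
  rw [pd_apply, e, (hg.fun_mul (φ.hasFDerivAt z)).fderiv]
  simp only [add_apply, mulT_apply, pd_apply]
  simp [dirDeriv]
  ring

/-- The Sobolev norms of a Schwartz function. -/
noncomputable def sob : ℕ → 𝓢(ℂ, ℂ) → ℝ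
  | 0, φ => l2 φ
  | n + 1, φ => sob n φ + sob n (pd 1 φ) + sob n (pd Complex.I φ)

lemma sob_nonneg (n : ℕ) (φ : 𝓢(ℂ, ℂ)) : 0 ≤ sob n φ := by
  induction n generalizing φ with
  | zero => exact l2_nonneg φ
  | succ n ih => exact add_nonneg (add_nonneg (ih _) (ih _)) (ih _)

lemma sob_le_succ (n : ℕ) (φ : 𝓢(ℂ, ℂ)) : sob n φ ≤ sob (n + 1) φ := by
  have := sob_nonneg n (pd 1 φ)
  have := sob_nonneg n (pd Complex.I φ)
  simp only [sob]; linarith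

lemma sob_mono {m n : ℕ} (h : m ≤ n) (φ : 𝓢(ℂ, ℂ)) : sob m φ ≤ sob n φ :=
  monotone_nat_of_le_succ (f := fun n => sob n φ) (fun n => sob_le_succ n φ) h

lemma sob_add_le (n : ℕ) (φ ψ : 𝓢(ℂ, ℂ)) : sob n (φ + ψ) ≤ sob n φ + sob n ψ := by
  induction n generalizing φ ψ with
  | zero => exact l2_add_le φ ψ
  | succ n ih =>
    simp only [sob, map_add]
    linarith [ih φ ψ, ih (pd 1 φ) (pd 1 ψ), ih (pd Complex.I φ) (pd Complex.I ψ)]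

lemma sob_smul (n : ℕ) (c : ℂ) (φ : 𝓢(ℂ, ℂ)) : sob n (c • φ) = ‖c‖ * sob n φ := by
  induction n generalizing φ with
  | zero => exact l2_smul c φ
  | succ n ih => simp only [sob, map_smul, ih]; ring

/-- Linear operators of finite order on the Sobolev scale. -/
def Tame (S : 𝓢(ℂ, ℂ) →ₗ[ℂ] 𝓢(ℂ, ℂ)) : Prop :=
  ∀ n, ∃ m K, 0 ≤ K ∧ ∀ φ, sob n (S φ) ≤ K * sob m φ

lemma Tame.add {S S' : 𝓢(ℂ, ℂ) →ₗ[ℂ] 𝓢(ℂ, ℂ)} (hS : Tame S) (hS' : Tame S') :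
    Tame (S + S') := by
  intro n
  obtain ⟨m, K, hK0, hK⟩ := hS n
  obtain ⟨m', K', hK0', hK'⟩ := hS' n
  refine ⟨max m m', K + K', by positivity, fun φ => (sob_add_le n _ _).trans ?_⟩
  rw [add_mul]
  exact add_le_add
    ((hK φ).trans (mul_le_mul_of_nonneg_left (sob_mono (le_max_left _ _) φ) hK0))
    ((hK' φ).trans (mul_le_mul_of_nonneg_left (sob_mono (le_max_right _ _) φ) hK0'))

lemma Tame.id_smul (c : ℂ) : Tame (c • LinearMap.id) := fun n =>
  ⟨n, ‖c‖, norm_nonneg c, fun φ => (sob_smul n c φ).le⟩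

lemma Tame.smul {S : 𝓢(ℂ, ℂ) →ₗ[ℂ] 𝓢(ℂ, ℂ)} (hS : Tame S) (c : ℂ) : Tame (c • S) := by
  intro n
  obtain ⟨m, K, hK0, hK⟩ := hS n
  refine ⟨m, ‖c‖ * K, by positivity, fun φ => ?_⟩
  rw [LinearMap.smul_apply, sob_smul, mul_assoc]
  exact mul_le_mul_of_nonneg_left (hK φ) (norm_nonneg c)

lemma Tame.pd_one : Tame (pd 1) := fun n => ⟨n + 1, 1, zero_le_one, fun φ => by
  have := sob_nonneg n φ
  have := sob_nonneg n (pd Complex.I φ)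
  simp only [sob]; linarith⟩

lemma Tame.pd_I : Tame (pd Complex.I) := fun n => ⟨n + 1, 1, zero_le_one, fun φ => by
  have := sob_nonneg n φ
  have := sob_nonneg n (pd 1 φ)
  simp only [sob]; linarith⟩

lemma Tame.mulT (g : bddSmooth) : Tame (mulT g) := by
  suffices h : ∀ n, ∃ K, 0 ≤ K ∧ ∀ φ, sob n (_root_.mulT g φ) ≤ K * sob n φ from
    fun n => ⟨n, h n⟩
  intro n
  induction n generalizing g with
  | zero =>
    obtain ⟨K, hK⟩ := (g.2 0).bdd
    refine ⟨K, (abs_nonneg _).trans (hK 0), fun φ => l2_le_of_le fun z => ?_⟩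
    rw [mulT_apply, norm_mul, Complex.norm_real, Real.norm_eq_abs]
    exact mul_le_mul_of_nonneg_right (hK z) (norm_nonneg _)
  | succ n ih =>
    obtain ⟨K, hK0, hK⟩ := ih g
    obtain ⟨L, hL0, hL⟩ := ih ⟨_, bddSmooth.dirDeriv_one g.2⟩
    obtain ⟨L', hL1, hL'⟩ := ih ⟨_, bddSmooth.dirDeriv_I g.2⟩
    refine ⟨K + L + L', by positivity, fun φ => ?_⟩
    simp only [sob]
    rw [pd_mulT 1 g (bddSmooth.dirDeriv_one g.2), pd_mulT Complex.I g (bddSmooth.dirDeriv_I g.2)]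
    have h0 := sob_nonneg n φ
    have h1 := sob_nonneg n (pd 1 φ)
    have h2 := sob_nonneg n (pd Complex.I φ)
    have := sob_add_le n (_root_.mulT ⟨_, bddSmooth.dirDeriv_one g.2⟩ φ) (_root_.mulT g (pd 1 φ))
    have := sob_add_le n (_root_.mulT ⟨_, bddSmooth.dirDeriv_I g.2⟩ φ)
      (_root_.mulT g (pd Complex.I φ))
    have := hK φ
    have := hK (pd 1 φ)
    have := hK (pd Complex.I φ)
    have := hL φ
    have := hL' φ
    nlinarith [mul_nonneg hL0 h1, mul_nonneg hL0 h2, mul_nonneg hL1 h1, mul_nonneg hL1 h2]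

/-- The distributions of finite negative Sobolev order. -/
def sobDist : Submodule ℂ (𝓢(ℂ, ℂ) →ₗ[ℂ] ℂ) where
  carrier := {F | ∃ n K, 0 ≤ K ∧ ∀ φ, ‖F φ‖ ≤ K * sob n φ}
  zero_mem' := ⟨0, 0, le_rfl, fun φ => by simp⟩
  add_mem' := by
    rintro F G ⟨m, K, hK0, hK⟩ ⟨m', K', hK0', hK'⟩
    refine ⟨max m m', K + K', by positivity, fun φ => (norm_add_le _ _).trans ?_⟩
    rw [add_mul]
    exact add_le_add
      ((hK φ).trans (mul_le_mul_of_nonneg_left (sob_mono (le_max_left _ _) φ) hK0))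
      ((hK' φ).trans (mul_le_mul_of_nonneg_left (sob_mono (le_max_right _ _) φ) hK0'))
  smul_mem' := by
    rintro c F ⟨m, K, hK0, hK⟩
    refine ⟨m, ‖c‖ * K, by positivity, fun φ => ?_⟩
    rw [LinearMap.smul_apply, norm_smul, mul_assoc]
    exact mul_le_mul_of_nonneg_left (hK φ) (norm_nonneg c)

lemma sobDist.comp_mem {F : 𝓢(ℂ, ℂ) →ₗ[ℂ] ℂ} (hF : F ∈ sobDist)
    {S : 𝓢(ℂ, ℂ) →ₗ[ℂ] 𝓢(ℂ, ℂ)} (hS : Tame S) : F.comp S ∈ sobDist := by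
  obtain ⟨n, K, hK0, hK⟩ := hF
  obtain ⟨m, L, hL0, hL⟩ := hS n
  refine ⟨m, K * L, by positivity, fun φ => (hK (S φ)).trans ?_⟩
  rw [mul_assoc]
  exact mul_le_mul_of_nonneg_left (hL φ) hK0

/-- The transpose of a finite order operator. -/
noncomputable def sobDist.pre (S : 𝓢(ℂ, ℂ) →ₗ[ℂ] 𝓢(ℂ, ℂ)) (hS : Tame S) : sobDist →+ sobDist where
  toFun F := ⟨F.1.comp S, sobDist.comp_mem F.2 hS⟩
  map_zero' := rfl
  map_add' _ _ := rfl

noncomputable instance : Module bddSmooth sobDist where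
  smul g F := ⟨F.1.comp (mulT g), sobDist.comp_mem F.2 (Tame.mulT g)⟩
  one_smul F := Subtype.ext (LinearMap.ext fun φ => congrArg F.1 (mulT_one φ))
  mul_smul g h F := Subtype.ext (LinearMap.ext fun φ => congrArg F.1 (by
    rw [mul_comm, mulT_mul]))
  smul_zero g := rfl
  smul_add g F G := rfl
  add_smul g h F := Subtype.ext (LinearMap.ext fun φ => (congrArg F.1 (mulT_add g h φ)).trans
    (map_add F.1 _ _))
  zero_smul F := Subtype.ext (LinearMap.ext fun φ => (congrArg F.1 (mulT_zero φ)).trans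
    (map_zero F.1))

lemma sobDist.smul_apply (g : bddSmooth) (F : sobDist) (φ : 𝓢(ℂ, ℂ)) :
    (g • F).1 φ = F.1 (mulT g φ) := rfl

/-- The transpose of `∂_v - a`. -/
noncomputable def pdT (v : ℂ) (a : ℝ) : 𝓢(ℂ, ℂ) →ₗ[ℂ] 𝓢(ℂ, ℂ) :=
  (-1 : ℂ) • pd v + (-a : ℂ) • LinearMap.id

lemma pdT_apply (v : ℂ) (a : ℝ) (φ : 𝓢(ℂ, ℂ)) : pdT v a φ = -pd v φ - (a : ℂ) • φ := by
  simp [pdT, sub_eq_add_neg]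

lemma Tame.pdT_one (a : ℝ) : Tame (pdT 1 a) := (pd_one.smul _).add (id_smul _)

lemma Tame.pdT_I (a : ℝ) : Tame (pdT Complex.I a) := (pd_I.smul _).add (id_smul _)

lemma pdT_comm (v w : ℂ) (a b : ℝ) (φ : 𝓢(ℂ, ℂ)) :
    pdT v a (pdT w b φ) = pdT w b (pdT v a φ) := by
  simp only [pdT_apply, map_sub, map_neg, map_smul, pd_comm v w]
  module

lemma pdT_mulT (v : ℂ) (a : ℝ) (g : bddSmooth) (hv : dirDeriv v g ∈ bddSmooth) (φ : 𝓢(ℂ, ℂ)) :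
    mulT g (pdT v a φ) = mulT ⟨dirDeriv v g, hv⟩ φ + pdT v a (mulT g φ) := by
  simp only [pdT_apply, pd_mulT v g hv, map_sub, map_neg, map_smul]
  module

/-- The connection `(∂_x - a, ∂_y - b)` on distributions of finite Sobolev order. -/
noncomputable def planeConn (a b : ℝ) : FlatConn planeDiff sobDist where
  X := sobDist.pre (pdT 1 a) (Tame.pdT_one a)
  Y := sobDist.pre (pdT Complex.I b) (Tame.pdT_I b)
  comm F := Subtype.ext (LinearMap.ext fun φ => congrArg F.1 (pdT_comm _ _ _ _ φ))
  leibX g F := Subtype.ext (LinearMap.ext fun φ => (congrArg F.1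
    (pdT_mulT 1 a g (bddSmooth.dirDeriv_one g.2) φ)).trans (map_add F.1 _ _))
  leibY g F := Subtype.ext (LinearMap.ext fun φ => (congrArg F.1
    (pdT_mulT Complex.I b g (bddSmooth.dirDeriv_I g.2) φ)).trans (map_add F.1 _ _))

lemma planeConn_X (a b : ℝ) (F : sobDist) (φ : 𝓢(ℂ, ℂ)) :
    ((planeConn a b).X F).1 φ = F.1 (pdT 1 a φ) := rfl

lemma planeConn_Y (a b : ℝ) (F : sobDist) (φ : 𝓢(ℂ, ℂ)) :
    ((planeConn a b).Y F).1 φ = F.1 (pdT Complex.I b φ) := rfl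

end

section

open scoped SchwartzMap LineDeriv FourierTransform ComplexConjugate

lemma fourier_pdT (v : ℂ) (a : ℝ) (φ : 𝓢(ℂ, ℂ)) (ξ : ℂ) :
    𝓕 (pdT v a φ) ξ = -(2 * Real.pi * Complex.I * (inner ℝ ξ v : ℝ) + a) * 𝓕 φ ξ := by
  have h1 : 𝓕 (pdT v a φ) = -𝓕 (∂_{v} φ) - (a : ℂ) • 𝓕 φ := by
    rw [pdT_apply]
    change FourierTransform.fourierCLM ℂ 𝓢(ℂ, ℂ) _ = _
    rw [map_sub, map_neg, map_smul]
    rfl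
  rw [h1, SchwartzMap.fourier_lineDerivOp_eq]
  have : (inner ℝ · v : ℂ → ℝ).HasTemperateGrowth := ((innerSL ℝ).flip v).hasTemperateGrowth
  simp only [sub_apply, neg_apply, smul_apply, SchwartzMap.smulLeftCLM_apply_apply this,
    smul_eq_mul, Complex.real_smul]
  ring

lemma fourier_pdT_one (a : ℝ) (φ : 𝓢(ℂ, ℂ)) (ξ : ℂ) :
    𝓕 (pdT 1 a φ) ξ = -(2 * Real.pi * Complex.I * ξ.re + a) * 𝓕 φ ξ := by
  simp [fourier_pdT, Complex.inner]

lemma fourier_pdT_I (a : ℝ) (φ : 𝓢(ℂ, ℂ)) (ξ : ℂ) :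
    𝓕 (pdT Complex.I a φ) ξ = -(2 * Real.pi * Complex.I * ξ.im + a) * 𝓕 φ ξ := by
  simp [fourier_pdT, Complex.inner]

lemma symbol_inv_hasTemperateGrowth {a : ℝ} (ha : a ≠ 0) :
    (fun ξ : ℂ => (-(2 * Real.pi * Complex.I * ξ.re + a))⁻¹).HasTemperateGrowth := by
  have h1 : (fun ξ : ℂ => (1 + ‖(2 * Real.pi / a) * ξ.re‖ ^ 2) ^ (-1 : ℝ)).HasTemperateGrowth :=
    (Function.hasTemperateGrowth_one_add_norm_sq_rpow ℝ (-1)).comp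
      ((2 * Real.pi / a) • Complex.reCLM).hasTemperateGrowth
  have h2 : (fun ξ : ℂ => (a ^ 2 : ℂ)⁻¹ * (2 * Real.pi * Complex.I * (ξ.re : ℂ)
    - a)).HasTemperateGrowth := by
    have : (fun ξ : ℂ => (ξ.re : ℂ)).HasTemperateGrowth :=
      (Complex.ofRealCLM.comp Complex.reCLM).hasTemperateGrowth
    exact (Function.HasTemperateGrowth.const _).mul
      (((Function.HasTemperateGrowth.const _).mul this).sub (Function.HasTemperateGrowth.const _))
  have h3 := (Function.Complex.hasTemperateGrowth_ofReal.comp h1).mul h2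
  refine (congrArg Function.HasTemperateGrowth (funext fun ξ => ?_)).mp h3
  have hp : (0 : ℝ) < a ^ 2 + (2 * Real.pi * ξ.re) ^ 2 := by positivity
  have hp' : (a : ℂ) ^ 2 + (2 * Real.pi * ξ.re) ^ 2 ≠ 0 := by exact_mod_cast hp.ne'
  have hq : -(2 * Real.pi * Complex.I * ξ.re + a : ℂ) ≠ 0 := by
    intro h
    have := congrArg Complex.re h
    simp at this
    exact ha this
  have ha' : (a : ℂ) ≠ 0 := by exact_mod_cast ha
  have e : (1 + ‖(2 * Real.pi / a) * ξ.re‖ ^ 2) ^ (-1 : ℝ)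
      = a ^ 2 * (a ^ 2 + (2 * Real.pi * ξ.re) ^ 2)⁻¹ := by
    rw [Real.rpow_neg_one, Real.norm_eq_abs, sq_abs]
    field_simp
  simp only [Pi.mul_apply, Function.comp_apply, e]
  push_cast
  refine eq_inv_of_mul_eq_one_left ?_
  have h4 := mul_inv_cancel₀ hp'
  have h5 := mul_inv_cancel₀ (pow_ne_zero 2 ha')
  generalize ((a : ℂ) ^ 2 + (2 * Real.pi * ξ.re) ^ 2)⁻¹ = r at h4 ⊢
  generalize ((a : ℂ) ^ 2)⁻¹ = t at h5 ⊢
  linear_combination h4 + r * (a ^ 2 - (2 * Real.pi * ξ.re * Complex.I) ^ 2) * h5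
    - r * (2 * Real.pi * ξ.re) ^ 2 * Complex.I_sq

lemma pdT_one_surjective {a : ℝ} (ha : a ≠ 0) : Function.Surjective (pdT 1 a) := by
  intro ψ
  have hg := symbol_inv_hasTemperateGrowth ha
  refine ⟨𝓕⁻ (SchwartzMap.smulLeftCLM ℂ
    (fun ξ : ℂ => (-(2 * Real.pi * Complex.I * ξ.re + a))⁻¹) (𝓕 ψ)), ?_⟩
  apply (FourierTransform.fourierCLE ℂ 𝓢(ℂ, ℂ)).injective
  change (𝓕 (pdT 1 a _) : 𝓢(ℂ, ℂ)) = 𝓕 ψ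
  ext ξ
  rw [fourier_pdT_one, FourierTransform.fourier_fourierInv_eq,
    SchwartzMap.smulLeftCLM_apply_apply hg, smul_eq_mul, ← mul_assoc, mul_inv_cancel₀, one_mul]
  intro h
  have := congrArg Complex.re h
  simp at this
  exact ha this

lemma l2_le_pdT_one {a : ℝ} (ha : a ≠ 0) (φ : 𝓢(ℂ, ℂ)) : l2 φ ≤ |a|⁻¹ * l2 (pdT 1 a φ) := by
  rw [← l2_fourier, ← l2_fourier (pdT 1 a φ)]
  refine l2_le_of_le fun ξ => ?_
  rw [fourier_pdT_one, norm_mul, norm_neg, ← mul_assoc]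
  refine le_mul_of_one_le_left (norm_nonneg _) ?_
  rw [inv_mul_eq_div, one_le_div (abs_pos.2 ha)]
  have := Complex.abs_re_le_norm (2 * Real.pi * Complex.I * ξ.re + a)
  simpa using this

lemma sob_le_pdT_one {a : ℝ} (ha : a ≠ 0) (n : ℕ) (φ : 𝓢(ℂ, ℂ)) :
    sob n φ ≤ |a|⁻¹ * sob n (pdT 1 a φ) := by
  induction n generalizing φ with
  | zero => exact l2_le_pdT_one ha φ
  | succ n ih =>
    have e : ∀ v, pd v (pdT 1 a φ) = pdT 1 a (pd v φ) := by
      intro v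
      simp only [pdT_apply, map_sub, map_neg, map_smul, pd_comm v 1]
    simp only [sob, e]
    rw [mul_add, mul_add]
    exact add_le_add (add_le_add (ih _) (ih _)) (ih _)

lemma pdT_one_injective {a : ℝ} (ha : a ≠ 0) : Function.Injective (pdT 1 a) := by
  rw [← LinearMap.ker_eq_bot, LinearMap.ker_eq_bot']
  intro φ h
  have := l2_le_pdT_one ha φ
  rw [h] at this
  have h0 : l2 (0 : 𝓢(ℂ, ℂ)) = 0 := by simpa using l2_smul 0 0
  rw [h0, mul_zero] at this
  exact SchwartzMap.injective_toLp 2 volume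
    ((norm_le_zero_iff.1 this).trans (norm_le_zero_iff.1 h0.le).symm)

lemma planeConn_bij {a c : ℝ} (b : ℝ) (hc : c ≠ -a) : Function.Bijective fun F : sobDist =>
    (planeConn a b).X F - algebraMap ℝ bddSmooth c • F := by
  have ha : a + c ≠ 0 := fun h => hc (by linarith)
  have key : ∀ (F : sobDist) φ,
      ((planeConn a b).X F - algebraMap ℝ bddSmooth c • F).1 φ = F.1 (pdT 1 (a + c) φ) := by
    intro F φ
    change F.1 (pdT 1 a φ) - F.1 (mulT (algebraMap ℝ bddSmooth c) φ) = _
    rw [mulT_algebraMap, ← map_sub, pdT_apply, pdT_apply]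
    congr 1
    push_cast
    module
  set e := LinearEquiv.ofBijective (pdT 1 (a + c)) ⟨pdT_one_injective ha, pdT_one_surjective ha⟩
  have ht : Tame (e.symm : 𝓢(ℂ, ℂ) →ₗ[ℂ] 𝓢(ℂ, ℂ)) := fun n =>
    ⟨n, |a + c|⁻¹, by positivity, fun φ => by
      have := sob_le_pdT_one ha n (e.symm φ)
      rwa [show pdT 1 (a + c) (e.symm φ) = φ from e.apply_symm_apply φ] at this⟩
  constructor
  · intro F G h
    refine Subtype.ext (LinearMap.ext fun φ => ?_)
    have h1 := congrArg (fun F : sobDist => F.1 (e.symm φ)) h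
    simp only [key] at h1
    rwa [show pdT 1 (a + c) (e.symm φ) = φ from e.apply_symm_apply φ] at h1
  · intro F
    refine ⟨sobDist.pre _ ht F, Subtype.ext (LinearMap.ext fun φ => ?_)⟩
    rw [key]
    exact congrArg F.1 (e.symm_apply_apply φ)

/-- The Bessel weight `(1 + |ξ|²)^r`. -/
noncomputable def bessel (r : ℝ) (ξ : ℂ) : ℂ := ((1 + ‖ξ‖ ^ 2) ^ r : ℝ)

lemma bessel_hasTemperateGrowth (r : ℝ) : (bessel r).HasTemperateGrowth :=
  Function.Complex.hasTemperateGrowth_ofReal.comp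
    (Function.hasTemperateGrowth_one_add_norm_sq_rpow ℂ r)

lemma sob_le_bessel (n : ℕ) : ∃ K, 0 ≤ K ∧ ∀ φ : 𝓢(ℂ, ℂ),
    sob n φ ≤ K * l2 (SchwartzMap.smulLeftCLM ℂ (bessel n) (𝓕 φ)) := by
  induction n with
  | zero =>
    refine ⟨1, zero_le_one, fun φ => ?_⟩
    change l2 φ ≤ _
    rw [← l2_fourier]
    refine l2_le_of_le fun ξ => ?_
    rw [SchwartzMap.smulLeftCLM_apply_apply (bessel_hasTemperateGrowth _)]
    simp [bessel]
  | succ n ih =>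
    obtain ⟨K, hK0, hK⟩ := ih
    have hw : ∀ ξ : ℂ, bessel ((n + 1 : ℕ) : ℝ) ξ = bessel n ξ * (1 + ‖ξ‖ ^ 2 : ℝ) := by
      intro ξ
      rw [bessel, bessel, ← Complex.ofReal_mul, Nat.cast_succ, Real.rpow_add_one (by positivity)]
    have hpd : ∀ (v : ℂ), (∀ ξ : ℂ, |inner ℝ ξ v| ≤ 1 + ‖ξ‖ ^ 2) → ∀ φ : 𝓢(ℂ, ℂ),
        l2 (SchwartzMap.smulLeftCLM ℂ (bessel n) (𝓕 (pd v φ)))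
          ≤ (2 * Real.pi) * l2 (SchwartzMap.smulLeftCLM ℂ (bessel (n + 1 : ℕ)) (𝓕 φ)) := by
      intro v hv φ
      refine l2_le_of_le fun ξ => ?_
      have h1 : 𝓕 (pd v φ) ξ = 2 * Real.pi * Complex.I * (inner ℝ ξ v : ℝ) * 𝓕 φ ξ := by
        have h := fourier_pdT v 0 φ ξ
        have h2 : 𝓕 (pdT v 0 φ) = -𝓕 (pd v φ) := by
          have : pdT v 0 φ = -pd v φ := by rw [pdT_apply]; simp
          rw [this]
          exact map_neg (FourierTransform.fourierCLM ℂ 𝓢(ℂ, ℂ)) _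
        rw [h2] at h
        simp only [neg_apply, Complex.ofReal_zero, add_zero] at h
        linear_combination -h
      rw [SchwartzMap.smulLeftCLM_apply_apply (bessel_hasTemperateGrowth _),
        SchwartzMap.smulLeftCLM_apply_apply (bessel_hasTemperateGrowth _), h1, hw]
      simp only [smul_eq_mul, norm_mul, Complex.norm_real, Complex.norm_I, Complex.norm_ofNat,
        Real.norm_eq_abs, abs_of_pos Real.pi_pos]
      rw [abs_of_pos (by positivity : 0 < 1 + ‖ξ‖ ^ 2)]
      calc ‖bessel n ξ‖ * (2 * Real.pi * 1 * |inner ℝ ξ v| * ‖𝓕 φ ξ‖)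
          = 2 * Real.pi * (‖bessel n ξ‖ * ‖𝓕 φ ξ‖ * |inner ℝ ξ v|) := by ring
        _ ≤ 2 * Real.pi * (‖bessel n ξ‖ * ‖𝓕 φ ξ‖ * (1 + ‖ξ‖ ^ 2)) := by
            gcongr; exact hv ξ
        _ = _ := by ring
    have h0 : ∀ φ : 𝓢(ℂ, ℂ), l2 (SchwartzMap.smulLeftCLM ℂ (bessel n) (𝓕 φ))
          ≤ 1 * l2 (SchwartzMap.smulLeftCLM ℂ (bessel (n + 1 : ℕ)) (𝓕 φ)) := by
      intro φ
      refine l2_le_of_le fun ξ => ?_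
      rw [SchwartzMap.smulLeftCLM_apply_apply (bessel_hasTemperateGrowth _),
        SchwartzMap.smulLeftCLM_apply_apply (bessel_hasTemperateGrowth _), hw, one_mul,
        norm_smul, norm_smul, norm_mul, Complex.norm_real, Real.norm_eq_abs,
        abs_of_pos (by positivity : 0 < 1 + ‖ξ‖ ^ 2)]
      gcongr
      exact le_mul_of_one_le_right (norm_nonneg _) (by nlinarith [sq_nonneg ‖ξ‖])
    have hn : ∀ x y : ℝ, 0 ≤ y → |x| ≤ y → |x| ≤ 1 + y ^ 2 := fun x y _ h => by nlinarith
    have hr := hpd 1 (fun ξ => by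
      simpa [Complex.inner] using hn _ _ (norm_nonneg ξ) (Complex.abs_re_le_norm ξ))
    have hi := hpd Complex.I (fun ξ => by
      simpa [Complex.inner] using hn _ _ (norm_nonneg ξ) (Complex.abs_im_le_norm ξ))
    refine ⟨K * (1 + 2 * Real.pi + 2 * Real.pi), by positivity, fun φ => ?_⟩
    simp only [sob]
    have h1 := (hK φ).trans (mul_le_mul_of_nonneg_left (h0 φ) hK0)
    have h2 := (hK (pd 1 φ)).trans (mul_le_mul_of_nonneg_left (hr φ) hK0)
    have h3 := (hK (pd Complex.I φ)).trans (mul_le_mul_of_nonneg_left (hi φ) hK0)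
    linarith

/-- The Fourier transform of a distribution of finite Sobolev order is a function. -/
lemma sobDist.exists_fourier (F : sobDist) : ∃ G : ℂ → ℂ, LocallyIntegrable G ∧
    ∀ φ, F.1 φ = ∫ ξ, 𝓕 φ ξ * G ξ := by
  obtain ⟨F, n, K, hK0, hK⟩ := F
  obtain ⟨L, hL0, hL⟩ := sob_le_bessel n
  set e : 𝓢(ℂ, ℂ) →ₗ[ℂ] Lp ℂ 2 (volume : Measure ℂ) :=
    (SchwartzMap.toLpCLM ℂ ℂ 2 volume).toLinearMap
  have he : DenseRange e := SchwartzMap.denseRange_toLpCLM (by norm_num)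
  have hinv : ∀ ψ : 𝓢(ℂ, ℂ), SchwartzMap.smulLeftCLM ℂ (bessel n)
      (SchwartzMap.smulLeftCLM ℂ (bessel (-n)) ψ) = ψ := by
    intro ψ
    ext ξ
    rw [SchwartzMap.smulLeftCLM_apply_apply (bessel_hasTemperateGrowth _),
        SchwartzMap.smulLeftCLM_apply_apply (bessel_hasTemperateGrowth _), smul_smul, bessel,
        bessel, ← Complex.ofReal_mul, ← Real.rpow_add (by positivity)]
    simp
  set Λ : 𝓢(ℂ, ℂ) →ₗ[ℂ] ℂ := F.comp
    ((FourierTransform.fourierInvCLM ℂ 𝓢(ℂ, ℂ)).comp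
      (SchwartzMap.smulLeftCLM ℂ (bessel (-n)))).toLinearMap with hΛ
  have hΛe : ∀ ψ, Λ ψ = F (𝓕⁻ (SchwartzMap.smulLeftCLM ℂ (bessel (-n)) ψ)) := fun ψ => rfl
  have hb : ∃ C, ∀ ψ, ‖Λ ψ‖ ≤ C * ‖e ψ‖ := by
    refine ⟨K * L, fun ψ => ?_⟩
    rw [hΛe, mul_assoc]
    refine (hK _).trans (mul_le_mul_of_nonneg_left ((hL _).trans ?_) hK0)
    rw [FourierTransform.fourier_fourierInv_eq, hinv]
    exact le_rfl
  set g := (InnerProductSpace.toDual ℂ (Lp ℂ 2 (volume : Measure ℂ))).symm (Λ.extendOfNorm e)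
  refine ⟨fun ξ => bessel n ξ * conj (g ξ), ?_, fun φ => ?_⟩
  · have hg : LocallyIntegrable (fun ξ => conj (g ξ)) volume :=
      ((Lp.memLp g).star).locallyIntegrable (by norm_num)
    rw [← locallyIntegrableOn_univ] at hg ⊢
    exact hg.continuousOn_mul (bessel_hasTemperateGrowth n).1.continuous.continuousOn
      isOpen_univ.isLocallyClosed
  · have h1 := LinearMap.extendOfNorm_eq he hb (SchwartzMap.smulLeftCLM ℂ (bessel n) (𝓕 φ))
    rw [← InnerProductSpace.toDual_symm_apply, hΛe,
      SchwartzMap.smulLeftCLM_smulLeftCLM_apply (bessel_hasTemperateGrowth _)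
        (bessel_hasTemperateGrowth _)] at h1
    have h2 : bessel (-n) * bessel n = fun _ => 1 := by
      ext ξ
      rw [Pi.mul_apply, bessel, bessel, ← Complex.ofReal_mul, ← Real.rpow_add (by positivity)]
      simp
    rw [h2, SchwartzMap.smulLeftCLM_const, one_smul, ContinuousLinearMap.id_apply,
      FourierTransform.fourierInv_fourier_eq] at h1
    change F φ = _
    rw [← h1, L2.inner_def]
    refine integral_congr_ae ?_
    filter_upwards [SchwartzMap.coeFn_toLp (SchwartzMap.smulLeftCLM ℂ (bessel n) (𝓕 φ)) 2 volume]
      with ξ hξ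
    change inner ℂ (g ξ) ((SchwartzMap.smulLeftCLM ℂ (bessel n) (𝓕 φ)).toLp 2 volume ξ) = _
    rw [hξ, SchwartzMap.smulLeftCLM_apply_apply (bessel_hasTemperateGrowth _)]
    simp only [RCLike.inner_apply, smul_eq_mul]
    ring

lemma ae_ne_zero_of_finite_sections {p : ℂ → ℂ} (hp : Continuous p)
    (h : ∀ x : ℝ, {y : ℝ | p ⟨x, y⟩ = 0}.Finite) : ∀ᵐ ξ : ℂ, p ξ ≠ 0 := by
  have hc : Continuous fun q : ℝ × ℝ => p ⟨q.1, q.2⟩ :=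
    hp.comp Complex.equivRealProdCLM.symm.continuous
  have h1 : ∀ᵐ q : ℝ × ℝ, p ⟨q.1, q.2⟩ ≠ 0 := by
    rw [Measure.volume_eq_prod, Measure.ae_prod_iff_ae_ae]
    · exact Filter.Eventually.of_forall fun x => by
        rw [ae_iff]
        simpa using (h x).measure_zero volume
    · exact (hc.measurable (measurableSet_singleton 0)).compl
  exact Complex.volume_preserving_equiv_real_prod.quasiMeasurePreserving.ae h1

/-- A constant coefficient operator whose symbol is nonzero almost everywhere is injective. -/
lemma sobDist.eq_zero_of_symbol (F : sobDist) {S : 𝓢(ℂ, ℂ) → 𝓢(ℂ, ℂ)} {p : ℂ → ℂ}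
    (hp : Continuous p) (hS : ∀ φ ξ, 𝓕 (S φ) ξ = p ξ * 𝓕 φ ξ)
    (h : ∀ x : ℝ, {y : ℝ | p ⟨x, y⟩ = 0}.Finite) (hF : ∀ φ, F.1 (S φ) = 0) : F = 0 := by
  obtain ⟨G, hG, hGF⟩ := sobDist.exists_fourier F
  have h1 : ∀ᵐ ξ : ℂ, p ξ * G ξ = 0 := by
    refine ae_eq_zero_of_integral_contDiff_smul_eq_zero ?_ fun g hg hgs => ?_
    · rw [← locallyIntegrableOn_univ] at hG ⊢
      exact hG.continuousOn_mul hp.continuousOn isOpen_univ.isLocallyClosed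
    · have hgs' : HasCompactSupport fun z => (g z : ℂ) := hgs.comp_left (g := Complex.ofReal) rfl
      have hg' : ContDiff ℝ (⊤ : ℕ∞) fun z => (g z : ℂ) := Complex.ofRealCLM.contDiff.comp hg
      have := hF (𝓕⁻ (hgs'.toSchwartzMap hg'))
      rw [hGF] at this
      simp only [hS, FourierTransform.fourier_fourierInv_eq] at this
      rw [← this]
      refine integral_congr_ae (Filter.Eventually.of_forall fun ξ => ?_)
      change g ξ • (p ξ * G ξ) = p ξ * (g ξ : ℂ) * G ξ
      rw [Complex.real_smul]; ring
  have h2 : ∀ᵐ ξ : ℂ, G ξ = 0 := by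
    filter_upwards [h1, ae_ne_zero_of_finite_sections hp h] with ξ h1 h2
    exact (mul_eq_zero.1 h1).resolve_left h2
  refine Subtype.ext (LinearMap.ext fun φ => ?_)
  rw [hGF, integral_eq_zero_of_ae]
  · rfl
  · filter_upwards [h2] with ξ h; simp [h]

end

section

open scoped SchwartzMap LineDeriv FourierTransform

lemma planeConn_admissible (a b : ℝ) : Admissible (planeConn a b) a where
  bij c hc := planeConn_bij b hc
  transport β σ F hF := by
    refine sobDist.eq_zero_of_symbol F
      (S := fun φ => pdT Complex.I b φ - (β : ℂ) • pdT 1 a φ - (σ : ℂ) • φ)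
      (p := fun ξ => -(2 * Real.pi * Complex.I * ξ.im + b)
        + β * (2 * Real.pi * Complex.I * ξ.re + a) - σ) (by fun_prop) ?_ ?_ ?_
    · intro φ ξ
      have : 𝓕 (pdT Complex.I b φ - (β : ℂ) • pdT 1 a φ - (σ : ℂ) • φ)
          = 𝓕 (pdT Complex.I b φ) - (β : ℂ) • 𝓕 (pdT 1 a φ) - (σ : ℂ) • 𝓕 φ := by
        change FourierTransform.fourierCLM ℂ 𝓢(ℂ, ℂ) _ = _
        simp only [map_sub, map_smul]
        rfl
      rw [this]
      simp only [sub_apply, smul_apply, fourier_pdT_one, fourier_pdT_I, smul_eq_mul]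
      ring
    · intro x
      refine Set.Subsingleton.finite fun y hy y' hy' => ?_
      simp only [Set.mem_ofPred_eq] at hy hy'
      have := congrArg Complex.im (hy.trans hy'.symm)
      simpa [Real.pi_ne_zero] using this
    · intro φ
      have h := congrArg (fun F : sobDist => F.1 φ) hF
      have e : ((planeConn a b).Y F - algebraMap ℝ bddSmooth β • (planeConn a b).X F
        - algebraMap ℝ bddSmooth σ • F).1 φ = F.1 (pdT Complex.I b φ)
          - F.1 (pdT 1 a (mulT (algebraMap ℝ bddSmooth β) φ))
          - F.1 (mulT (algebraMap ℝ bddSmooth σ) φ) := rfl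
      simp only [e, mulT_algebraMap, map_smul] at h
      simp only [map_sub, map_smul]
      exact h

lemma planeConn_vacuum (a b b₁ b₂ : ℝ) (F : sobDist)
    (hF : Ast (planeConn a b) (algebraMap ℝ bddSmooth b₁) (algebraMap ℝ bddSmooth b₂) 0 F = 0) :
    F = 0 := by
  refine sobDist.eq_zero_of_symbol F
    (S := fun φ => (3 : ℂ) • pdT Complex.I b (pdT Complex.I b φ)
      - (4 * b₂ : ℂ) • pdT 1 a (pdT Complex.I b φ) + pdT 1 a (pdT 1 a (pdT 1 a (pdT 1 a φ)))
      - (4 * b₁ : ℂ) • pdT 1 a (pdT 1 a φ))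
    (p := fun ξ => 3 * (2 * Real.pi * Complex.I * ξ.im + b) ^ 2
      - 4 * b₂ * (2 * Real.pi * Complex.I * ξ.re + a) * (2 * Real.pi * Complex.I * ξ.im + b)
      + (2 * Real.pi * Complex.I * ξ.re + a) ^ 4
      - 4 * b₁ * (2 * Real.pi * Complex.I * ξ.re + a) ^ 2) (by fun_prop) ?_ ?_ ?_
  · intro φ ξ
    have : 𝓕 ((3 : ℂ) • pdT Complex.I b (pdT Complex.I b φ)
      - (4 * b₂ : ℂ) • pdT 1 a (pdT Complex.I b φ) + pdT 1 a (pdT 1 a (pdT 1 a (pdT 1 a φ)))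
      - (4 * b₁ : ℂ) • pdT 1 a (pdT 1 a φ)) = (3 : ℂ) • 𝓕 (pdT Complex.I b (pdT Complex.I b φ))
      - (4 * b₂ : ℂ) • 𝓕 (pdT 1 a (pdT Complex.I b φ))
      + 𝓕 (pdT 1 a (pdT 1 a (pdT 1 a (pdT 1 a φ))))
      - (4 * b₁ : ℂ) • 𝓕 (pdT 1 a (pdT 1 a φ)) := by
      change FourierTransform.fourierCLM ℂ 𝓢(ℂ, ℂ) _ = _
      simp only [map_sub, map_add, map_smul]
      rfl
    rw [this]
    simp only [sub_apply, add_apply, smul_apply, fourier_pdT_one, fourier_pdT_I, smul_eq_mul]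
    ring
  · intro x
    set w : ℂ := 2 * Real.pi * Complex.I * x + a
    have h := (Polynomial.finite_setOfPred_isRoot (p := Polynomial.C (3 : ℂ) * Polynomial.X ^ 2
      + Polynomial.C (-4 * b₂ * w) * Polynomial.X + Polynomial.C (w ^ 4 - 4 * b₁ * w ^ 2))
      (fun h => by simpa using
        (Polynomial.natDegree_quadratic (b := -4 * b₂ * w) (c := w ^ 4 - 4 * b₁ * w ^ 2)
          (three_ne_zero' ℂ)).symm.trans (congrArg Polynomial.natDegree h)))
    refine (h.preimage (f := fun y : ℝ => 2 * Real.pi * Complex.I * (y : ℂ) + b)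
      fun y _ y' _ hy => ?_).subset fun y hy => ?_
    · have := congrArg Complex.im hy
      simpa [Real.pi_ne_zero] using this
    · simp only [Set.mem_ofPred_eq] at hy
      simp only [Set.mem_preimage, Set.mem_ofPred_eq, Polynomial.IsRoot.def, Polynomial.eval_add,
        Polynomial.eval_mul, Polynomial.eval_C, Polynomial.eval_pow, Polynomial.eval_X]
      linear_combination hy
  · intro φ
    have h := congrArg (fun F : sobDist => F.1 φ) hF
    have e3 : (3 : bddSmooth) = algebraMap ℝ bddSmooth 3 := (map_ofNat _ 3).symm
    have e4 : (4 : bddSmooth) = algebraMap ℝ bddSmooth 4 := (map_ofNat _ 4).symm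
    rw [Ast, mul_zero, zero_smul, add_zero, e3, e4, ← map_mul, ← map_mul] at h
    have e : ∀ G₁ G₂ G₃ G₄ : sobDist, ∀ c₁ c₂ c₃ : ℝ, (algebraMap ℝ bddSmooth c₁ • G₁
        - algebraMap ℝ bddSmooth c₂ • G₂ + G₃ - algebraMap ℝ bddSmooth c₃ • G₄).1 φ
        = c₁ * G₁.1 φ - c₂ * G₂.1 φ + G₃.1 φ - c₃ * G₄.1 φ := by
      intro G₁ G₂ G₃ G₄ c₁ c₂ c₃
      change G₁.1 (mulT _ φ) - G₂.1 (mulT _ φ) + G₃.1 φ - G₄.1 (mulT _ φ) = _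
      simp only [mulT_algebraMap, map_smul, smul_eq_mul]
    simp only [e, planeConn_X, planeConn_Y] at h
    simp only [map_sub, map_add, map_smul, smul_eq_mul]
    push_cast at h
    exact h

end

section

/-- The exponential `e^{κ x + κ² y}`. -/
noncomputable def expo (κ : ℝ) (z : ℂ) : ℝ := Real.exp (κ * z.re + κ ^ 2 * z.im)

lemma expo_pos (κ : ℝ) (z : ℂ) : 0 < expo κ z := Real.exp_pos _

lemma hasFDerivAt_expo (κ : ℝ) (z : ℂ) : HasFDerivAt (expo κ)
    (expo κ z • (κ • Complex.reCLM + κ ^ 2 • Complex.imCLM)) z :=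
  ((Complex.reCLM.hasFDerivAt.const_mul κ).add (Complex.imCLM.hasFDerivAt.const_mul (κ ^ 2))).exp

/-- The logarithmic derivative of `e^{k x + k² y} + e^{k' x + k'² y}`. -/
noncomputable def kink (k k' : ℝ) (z : ℂ) : ℝ :=
  (k * expo k z + k' * expo k' z) / (expo k z + expo k' z)

lemma kink_sub (k k' : ℝ) (z : ℂ) :
    kink k k' z - k = (k' - k) * expo k' z / (expo k z + expo k' z) := by
  have := expo_pos k z
  have := expo_pos k' z
  rw [kink]; field_simp; ring

lemma sub_kink (k k' : ℝ) (z : ℂ) :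
    k' - kink k k' z = (k' - k) * expo k z / (expo k z + expo k' z) := by
  have := expo_pos k z
  have := expo_pos k' z
  rw [kink]; field_simp; ring

lemma hasFDerivAt_kink (k k' : ℝ) (z : ℂ) : HasFDerivAt (kink k k')
    (((k' - kink k k' z) * (kink k k' z - k)) • (Complex.reCLM + (k + k') • Complex.imCLM)) z := by
  have h1 := hasFDerivAt_expo k z
  have h2 := hasFDerivAt_expo k' z
  have p1 := expo_pos k z
  have p2 := expo_pos k' z
  have h0 : expo k z + expo k' z ≠ 0 := by positivity
  have h3 := (hasDerivAt_inv h0).comp_hasFDerivAt z (h1.add h2)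
  have h4 := ((h1.const_mul k).add (h2.const_mul k')).mul h3
  refine h4.congr_fderiv ?_
  rw [kink_sub, sub_kink]
  ext v
  simp
  field_simp
  ring

lemma kink_mem (k k' : ℝ) (h : k < k') : kink k k' ∈ bddSmooth := by
  have hle : ∀ z, k ≤ kink k k' z ∧ kink k k' z ≤ k' := fun z => by
    have p1 := expo_pos k z
    have p2 := expo_pos k' z
    have h1 := kink_sub k k' z
    have h2 := sub_kink k k' z
    have : 0 < k' - k := sub_pos.2 h
    have h3 : 0 < (k' - k) * expo k' z / (expo k z + expo k' z) := by positivity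
    have h4 : 0 < (k' - k) * expo k z / (expo k z + expo k' z) := by positivity
    constructor <;> linarith
  have hd : ∀ v, dirDeriv v (kink k k') = (fun _ => v.re + (k + k') * v.im) *
      (((fun _ => k') + (fun _ => -1) * kink k k') * (kink k k' + fun _ => -k)) := by
    intro v
    ext z
    rw [dirDeriv, (hasFDerivAt_kink k k' z).fderiv]
    simp
    ring
  have hs : ∀ v n, BddSmooth n (kink k k') → BddSmooth n (dirDeriv v (kink k k')) := by
    intro v n hn
    rw [hd]
    exact (BddSmooth.const _ n).mul (((BddSmooth.const _ n).add
      ((BddSmooth.const _ n).mul hn)).mul (hn.add (BddSmooth.const _ n)))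
  refine bddSmooth.mem_of_deriv ⟨max |k| |k'|, fun z => ?_⟩
    (fun z => (hasFDerivAt_kink k k' z).differentiableAt) (hs 1) (hs Complex.I)
  exact abs_le_max_abs_abs (hle z).1 (hle z).2

lemma kink_soliton (k k' : ℝ) (h : k < k') :
    Soliton planeDiff k k' ⟨kink k k', kink_mem k k' h⟩ := by
  have hx : ∀ z, dirDeriv 1 (kink k k') z = (k' - kink k k' z) * (kink k k' z - k) := fun z => by
    rw [dirDeriv, (hasFDerivAt_kink k k' z).fderiv]; simp
  have hy : ∀ z, dirDeriv Complex.I (kink k k') z =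
    (k + k') * dirDeriv 1 (kink k k') z := fun z => by
    rw [hx, dirDeriv, (hasFDerivAt_kink k k' z).fderiv]; simp; ring
  exact ⟨Subtype.ext (funext hx), Subtype.ext (funext hy)⟩

/-- The quotient of the `τ`-function of the P-type soliton by those of its two line solitons. -/
noncomputable def dress (κ₁ κ₂ κ₃ κ₄ : ℝ) (z : ℂ) : ℝ :=
  (κ₄ - κ₁)⁻¹ * ((kink κ₂ κ₃ z - κ₁) * (κ₄ - kink κ₁ κ₄ z)
    + (κ₄ - kink κ₂ κ₃ z) * (kink κ₁ κ₄ z - κ₁))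

variable {κ₁ κ₂ κ₃ κ₄ : ℝ}

lemma Ptau_eq (h : κ₁ < κ₄) (z : ℂ) : Ptau κ₁ κ₂ κ₃ κ₄ z.re z.im =
    (expo κ₂ z + expo κ₃ z) * (expo κ₁ z + expo κ₄ z) * dress κ₁ κ₂ κ₃ κ₄ z := by
  have e : ∀ a b : ℝ, Real.exp ((a + b) * z.re + (a ^ 2 + b ^ 2) * z.im)
      = expo a z * expo b z := fun a b => by
    rw [expo, expo, ← Real.exp_add]; ring_nf
  have p1 := expo_pos κ₁ z
  have p2 := expo_pos κ₂ z
  have p3 := expo_pos κ₃ z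
  have p4 := expo_pos κ₄ z
  have h' := sub_pos.2 h
  simp only [Ptau, e]
  rw [dress, kink_sub κ₁, sub_kink κ₁, kink]
  field_simp
  ring

lemma le_dress (h12 : κ₁ < κ₂) (h23 : κ₂ < κ₃) (h34 : κ₃ < κ₄) (z : ℂ) :
    min (κ₂ - κ₁) (κ₄ - κ₃) ≤ dress κ₁ κ₂ κ₃ κ₄ z := by
  have p1 := expo_pos κ₁ z
  have p2 := expo_pos κ₂ z
  have p3 := expo_pos κ₃ z
  have p4 := expo_pos κ₄ z
  have h14 : 0 < κ₄ - κ₁ := by linarith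
  have h23' : 0 < κ₃ - κ₂ := by linarith
  have a1 : 0 ≤ kink κ₂ κ₃ z - κ₂ := by rw [kink_sub]; positivity
  have a2 : 0 ≤ κ₃ - kink κ₂ κ₃ z := by rw [sub_kink]; positivity
  have a3 : 0 ≤ kink κ₁ κ₄ z - κ₁ := by rw [kink_sub]; positivity
  have a4 : 0 ≤ κ₄ - kink κ₁ κ₄ z := by rw [sub_kink]; positivity
  set m := min (κ₂ - κ₁) (κ₄ - κ₃)
  have m1 : m ≤ κ₂ - κ₁ := min_le_left _ _
  have m2 : m ≤ κ₄ - κ₃ := min_le_right _ _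
  rw [dress, inv_mul_eq_div, le_div_iff₀ h14]
  nlinarith [mul_le_mul_of_nonneg_right (show m ≤ kink κ₂ κ₃ z - κ₁ by linarith) a4,
    mul_le_mul_of_nonneg_right (show m ≤ κ₄ - kink κ₂ κ₃ z by linarith) a3]

/-- The dressed two-soliton data and the resulting potential. -/
lemma exists_dressing (h12 : κ₁ < κ₂) (h23 : κ₂ < κ₃) (h34 : κ₃ < κ₄) :
    ∃ Q q₀ h H : bddSmooth, Soliton planeDiff κ₂ κ₃ Q ∧ Soliton planeDiff κ₁ κ₄ q₀ ∧
      Dressing planeDiff κ₁ κ₄ Q q₀ h H ∧ ∀ z : ℂ, Pu2 κ₁ κ₂ κ₃ κ₄ z.re z.im =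
        (2 * planeDiff.dx Q + 2 * planeDiff.dx (planeDiff.dx h * H + q₀) : bddSmooth).1 z := by
  have h14 : κ₁ < κ₄ := by linarith
  set Q : bddSmooth := ⟨kink κ₂ κ₃, kink_mem κ₂ κ₃ h23⟩
  set q₀ : bddSmooth := ⟨kink κ₁ κ₄, kink_mem κ₁ κ₄ h14⟩
  set h : bddSmooth := algebraMap ℝ bddSmooth (κ₄ - κ₁)⁻¹ * ((Q - algebraMap ℝ bddSmooth κ₁) *
    (algebraMap ℝ bddSmooth κ₄ - q₀) + (algebraMap ℝ bddSmooth κ₄ - Q) *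
      (q₀ - algebraMap ℝ bddSmooth κ₁))
  have hd : h.1 = dress κ₁ κ₂ κ₃ κ₄ := rfl
  have hm : 0 < min (κ₂ - κ₁) (κ₄ - κ₃) := lt_min (by linarith) (by linarith)
  have hp : ∀ z, 0 < h.1 z := fun z => hm.trans_le (le_dress h12 h23 h34 z)
  set H : bddSmooth := ⟨h.1⁻¹, bddSmooth.inv_mem h.2 hm (le_dress h12 h23 h34)⟩
  refine ⟨Q, q₀, h, H, kink_soliton _ _ h23, kink_soliton _ _ h14,
    ⟨rfl, Subtype.ext (funext fun z => inv_mul_cancel₀ (hp z).ne')⟩, ?_⟩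
  have hderiv : ∀ f : bddSmooth, ∀ z : ℂ, HasDerivAt (fun s : ℝ => f.1 ⟨s, z.im⟩)
      ((planeDiff.dx f).1 z) z.re := by
    intro f z
    have hz : HasDerivAt (fun s : ℝ => (⟨s, z.im⟩ : ℂ)) 1 z.re := by
      have := (Complex.ofRealCLM.hasDerivAt (x := z.re)).add_const (z.im * Complex.I)
      refine (this.congr_deriv (by simp)).congr_of_eventuallyEq
        (Filter.Eventually.of_forall fun s => ?_)
      simp [Complex.mk_eq_add_mul_I]
    exact (bddSmooth.differentiable f.2 z).hasFDerivAt.comp_hasDerivAt z.re hz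
  have hlog : ∀ z : ℂ, pX (fun a b => Real.log (Ptau κ₁ κ₂ κ₃ κ₄ a b)) z.re z.im
      = (Q + (planeDiff.dx h * H + q₀)).1 z := by
    intro z
    have p1 := expo_pos κ₁
    have p2 := expo_pos κ₂
    have p3 := expo_pos κ₃
    have p4 := expo_pos κ₄
    have he : ∀ κ, HasDerivAt (fun s : ℝ => expo κ ⟨s, z.im⟩) (expo κ z * κ) z.re := by
      intro κ
      exact (((hasDerivAt_id' z.re).const_mul κ).add_const (κ ^ 2 * z.im)).exp.congr_deriv
        (by simp [expo])
    have h1 : (fun s => Real.log (Ptau κ₁ κ₂ κ₃ κ₄ s z.im)) = fun s : ℝ =>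
        Real.log (expo κ₂ ⟨s, z.im⟩ + expo κ₃ ⟨s, z.im⟩)
        + Real.log (expo κ₁ ⟨s, z.im⟩ + expo κ₄ ⟨s, z.im⟩) + Real.log (h.1 ⟨s, z.im⟩) := by
      ext s
      have := Ptau_eq (κ₂ := κ₂) (κ₃ := κ₃) h14 ⟨s, z.im⟩
      rw [← hd] at this
      rw [this, Real.log_mul, Real.log_mul]
      · exact (add_pos (p2 _) (p3 _)).ne'
      · exact (add_pos (p1 _) (p4 _)).ne'
      · exact (mul_pos (add_pos (p2 _) (p3 _)) (add_pos (p1 _) (p4 _))).ne'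
      · exact (hp _).ne'
    rw [pX, h1]
    refine (((((he κ₂).add (he κ₃)).log (add_pos (p2 z) (p3 z)).ne').add
      (((he κ₁).add (he κ₄)).log (add_pos (p1 z) (p4 z)).ne')).add
      ((hderiv h z).log (hp z).ne')).deriv.trans ?_
    change (expo κ₂ z * κ₂ + expo κ₃ z * κ₃) / (expo κ₂ z + expo κ₃ z)
      + (expo κ₁ z * κ₁ + expo κ₄ z * κ₄) / (expo κ₁ z + expo κ₄ z)
      + (planeDiff.dx h).1 z / h.1 z = kink κ₂ κ₃ z
        + ((planeDiff.dx h).1 z * (h.1 z)⁻¹ + kink κ₁ κ₄ z)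
    rw [kink, kink]
    ring
  intro z
  have h2 : (fun s => pX (fun a b => Real.log (Ptau κ₁ κ₂ κ₃ κ₄ a b)) s z.im)
      = fun s : ℝ => (Q + (planeDiff.dx h * H + q₀)).1 ⟨s, z.im⟩ := funext fun s => hlog ⟨s, z.im⟩
  rw [Pu2, pX, h2, (hderiv _ z).deriv, map_add, ← mul_add]
  rfl

end

section

open scoped SchwartzMap LineDeriv FourierTransform ComplexConjugate

lemma bddSmooth.of_hasCompactSupport {f : ℂ → ℝ} (hf : ContDiff ℝ (⊤ : ℕ∞) f)
    (hs : HasCompactSupport f) : f ∈ bddSmooth := by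
  intro n
  induction n generalizing f with
  | zero => exact hs.exists_bound_of_continuous hf.continuous
  | succ n ih =>
    have hd : ∀ v, BddSmooth n (dirDeriv v f) := fun v =>
      ih ((hf.fderiv_right (m := (⊤ : ℕ∞)) (by simp)).clm_apply contDiff_const)
        (hs.fderiv_apply ℝ v)
    exact ⟨hs.exists_bound_of_continuous hf.continuous, hf.differentiable (by simp), hd _, hd _⟩

lemma dirDeriv_dilate {f : ℂ → ℝ} (hf : Differentiable ℝ f) (ε : ℝ) (v : ℂ) :
    dirDeriv v (fun z => f (ε • z)) = (fun _ => ε) * fun z => dirDeriv v f (ε • z) := by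
  ext z
  have h : HasFDerivAt (fun z : ℂ => ε • z) (ε • ContinuousLinearMap.id ℝ ℂ) z :=
    (ε • ContinuousLinearMap.id ℝ ℂ).hasFDerivAt
  have := ((hf (ε • z)).hasFDerivAt.comp z h).fderiv
  change fderiv ℝ (fun z => f (ε • z)) z = _ at this
  rw [dirDeriv, this]
  simp [dirDeriv]

lemma BddSmooth.dilate {n : ℕ} {f : ℂ → ℝ} (hf : BddSmooth n f) (ε : ℝ) :
    BddSmooth n fun z => f (ε • z) := by
  induction n generalizing f with
  | zero => exact hf.imp fun K hK z => hK _
  | succ n ih =>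
    have hd : Differentiable ℝ fun z : ℂ => f (ε • z) :=
      hf.2.1.comp (differentiable_id.const_smul ε)
    refine ⟨hf.1.imp fun K hK z => hK _, hd, ?_, ?_⟩ <;> rw [dirDeriv_dilate hf.2.1]
    · exact (BddSmooth.const _ n).mul (ih hf.2.2.1)
    · exact (BddSmooth.const _ n).mul (ih hf.2.2.2)

/-- The dilation `z ↦ g (ε z)` of a coefficient. -/
noncomputable def bddSmooth.dilate (ε : ℝ) (g : bddSmooth) : bddSmooth :=
  ⟨fun z => g.1 (ε • z), fun n => (g.2 n).dilate ε⟩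

lemma pd_mulT_dilate (v : ℂ) (ε : ℝ) (g : bddSmooth) (hv : dirDeriv v g ∈ bddSmooth)
    (φ : 𝓢(ℂ, ℂ)) : pd v (mulT (bddSmooth.dilate ε g) φ) =
      (ε : ℂ) • mulT (bddSmooth.dilate ε ⟨dirDeriv v g, hv⟩) φ
        + mulT (bddSmooth.dilate ε g) (pd v φ) := by
  have e : dirDeriv v (bddSmooth.dilate ε g).1
      = (algebraMap ℝ bddSmooth ε * bddSmooth.dilate ε ⟨dirDeriv v g, hv⟩ : bddSmooth).1 :=
    dirDeriv_dilate (bddSmooth.differentiable g.2) ε v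
  rw [pd_mulT v _ (e ▸ Subtype.property _)]
  congr 1
  rw [← mulT_algebraMap, ← mulT_mul]
  exact congrArg (fun g => mulT g φ) (Subtype.ext e)

lemma sob_mulT_dilate_le (n : ℕ) (g : bddSmooth) : ∃ K, 0 ≤ K ∧ ∀ ε : ℝ, 0 ≤ ε → ε ≤ 1 →
    ∀ φ, sob n (mulT (bddSmooth.dilate ε g) φ) ≤ K * sob n φ := by
  induction n generalizing g with
  | zero =>
    obtain ⟨K, hK⟩ := (g.2 0).bdd
    refine ⟨K, (abs_nonneg _).trans (hK 0), fun ε _ _ φ => l2_le_of_le fun z => ?_⟩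
    rw [mulT_apply, norm_mul, Complex.norm_real, Real.norm_eq_abs]
    exact mul_le_mul_of_nonneg_right (hK _) (norm_nonneg _)
  | succ n ih =>
    obtain ⟨K, hK0, hK⟩ := ih g
    obtain ⟨L, hL0, hL⟩ := ih ⟨_, bddSmooth.dirDeriv_one g.2⟩
    obtain ⟨L', hL1, hL'⟩ := ih ⟨_, bddSmooth.dirDeriv_I g.2⟩
    refine ⟨K + L + L', by positivity, fun ε h0 h1 φ => ?_⟩
    simp only [sob]
    rw [pd_mulT_dilate 1 ε g (bddSmooth.dirDeriv_one g.2),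
      pd_mulT_dilate Complex.I ε g (bddSmooth.dirDeriv_I g.2)]
    have p0 := sob_nonneg n φ
    have p1 := sob_nonneg n (pd 1 φ)
    have p2 := sob_nonneg n (pd Complex.I φ)
    have hε : ∀ ψ, sob n ((ε : ℂ) • ψ) ≤ sob n ψ := fun ψ => by
      rw [sob_smul, Complex.norm_real, Real.norm_of_nonneg h0]
      exact mul_le_of_le_one_left (sob_nonneg n ψ) h1
    have := (sob_add_le n _ _).trans (add_le_add ((hε _).trans (hL ε h0 h1 φ))
      (hK ε h0 h1 (pd 1 φ)))
    have := (sob_add_le n _ _).trans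
      (add_le_add ((hε _).trans (hL' ε h0 h1 φ)) (hK ε h0 h1 (pd Complex.I φ)))
    have := hK ε h0 h1 φ
    nlinarith [mul_nonneg hL0 p1, mul_nonneg hL0 p2, mul_nonneg hL1 p1, mul_nonneg hL1 p2]

lemma sob_mulT_dilate_small (n : ℕ) (g : bddSmooth) (hg : ∀ z, |g.1 z| ≤ ‖z‖) (φ : 𝓢(ℂ, ℂ)) :
    ∃ K, 0 ≤ K ∧ ∀ ε : ℝ, 0 ≤ ε → ε ≤ 1 → sob n (mulT (bddSmooth.dilate ε g) φ) ≤ ε * K := by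
  induction n generalizing φ with
  | zero =>
    have ht : (fun z : ℂ => z).HasTemperateGrowth :=
      (ContinuousLinearMap.id ℝ ℂ).hasTemperateGrowth
    refine ⟨l2 (SchwartzMap.smulLeftCLM ℂ (fun z : ℂ => z) φ), l2_nonneg _,
      fun ε h0 _ => l2_le_of_le fun z => ?_⟩
    rw [mulT_apply, norm_mul, Complex.norm_real, Real.norm_eq_abs,
      SchwartzMap.smulLeftCLM_apply_apply ht, smul_eq_mul, norm_mul, ← mul_assoc]
    refine mul_le_mul_of_nonneg_right ((hg _).trans_eq ?_) (norm_nonneg _)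
    rw [norm_smul, Real.norm_of_nonneg h0]
  | succ n ih =>
    obtain ⟨K₀, hK₀, h₀⟩ := ih φ
    obtain ⟨K₁, hK₁, h₁⟩ := ih (pd 1 φ)
    obtain ⟨K₂, hK₂, h₂⟩ := ih (pd Complex.I φ)
    obtain ⟨L, hL0, hL⟩ := sob_mulT_dilate_le n ⟨_, bddSmooth.dirDeriv_one g.2⟩
    obtain ⟨L', hL1, hL'⟩ := sob_mulT_dilate_le n ⟨_, bddSmooth.dirDeriv_I g.2⟩
    have p0 := sob_nonneg n φ
    refine ⟨K₀ + (L * sob n φ + K₁) + (L' * sob n φ + K₂), by positivity, fun ε e0 e1 => ?_⟩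
    simp only [sob]
    rw [pd_mulT_dilate 1 ε g (bddSmooth.dirDeriv_one g.2),
      pd_mulT_dilate Complex.I ε g (bddSmooth.dirDeriv_I g.2)]
    have hε : ∀ ψ K, sob n ψ ≤ K → sob n ((ε : ℂ) • ψ) ≤ ε * K := fun ψ K h => by
      rw [sob_smul, Complex.norm_real, Real.norm_of_nonneg e0]
      exact mul_le_mul_of_nonneg_left h e0
    have := (sob_add_le n _ _).trans (add_le_add (hε _ _ (hL ε e0 e1 φ)) (h₁ ε e0 e1))
    have := (sob_add_le n _ _).trans (add_le_add (hε _ _ (hL' ε e0 e1 φ)) (h₂ ε e0 e1))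
    have := h₀ ε e0 e1
    linarith

/-- A distribution of finite Sobolev order vanishing on test functions vanishes. -/
lemma sobDist.eq_zero_of_hasCompactSupport (F : sobDist)
    (hF : ∀ φ : 𝓢(ℂ, ℂ), HasCompactSupport φ → F.1 φ = 0) : F = 0 := by
  refine Subtype.ext (LinearMap.ext fun φ => ?_)
  let χ : ContDiffBump (0 : ℂ) := ⟨1, 2, one_pos, one_lt_two⟩
  let c : bddSmooth := ⟨χ, bddSmooth.of_hasCompactSupport χ.contDiff χ.hasCompactSupport⟩
  have hc : ∀ z, |(1 - c).1 z| ≤ ‖z‖ := by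
    intro z
    change |1 - χ z| ≤ ‖z‖
    rcases le_or_gt ‖z‖ 1 with h | h
    · rw [χ.one_of_mem_closedBall (by simpa [χ] using h)]
      simp
    · rw [abs_of_nonneg (by linarith [χ.le_one (x := z)])]
      linarith [χ.nonneg (x := z)]
  obtain ⟨F, n, K, hK0, hK⟩ := F
  obtain ⟨L, hL0, hL⟩ := sob_mulT_dilate_small n (1 - c) hc φ
  have key : ∀ ε : ℝ, 0 < ε → ε ≤ 1 → ‖F φ‖ ≤ ε * (K * L) := by
    intro ε e0 e1
    have h1 : φ = mulT (bddSmooth.dilate ε c) φ + mulT (bddSmooth.dilate ε (1 - c)) φ := by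
      rw [← mulT_add]
      conv_lhs => rw [← mulT_one φ]
      congr 1
      refine congrArg mulT (Subtype.ext (funext fun z => ?_))
      change (1 : ℝ) = c.1 (ε • z) + (1 - c.1 (ε • z))
      ring
    have h2 : F (mulT (bddSmooth.dilate ε c) φ) = 0 := by
      refine hF _ ?_
      have : HasCompactSupport fun z : ℂ => χ (ε • z) :=
        χ.hasCompactSupport.comp_homeomorph (Homeomorph.smulOfNeZero ε e0.ne')
      refine this.mono' (subset_trans (fun z hz => ?_) subset_closure)
      intro h0
      refine hz ?_
      rw [mulT_apply]
      change ((χ (ε • z) : ℝ) : ℂ) * _ = 0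
      rw [show χ (ε • z) = 0 from h0, Complex.ofReal_zero, zero_mul]
    rw [h1, map_add, h2, zero_add]
    refine (hK _).trans ((mul_le_mul_of_nonneg_left (hL ε e0.le e1) hK0).trans_eq (by ring))
  change F φ = 0
  by_contra hne
  have hpos := norm_pos_iff.2 hne
  have h1 := key (min 1 (‖F φ‖ / (2 * (K * L + 1)))) (by positivity) (min_le_left _ _)
  have h2 : min 1 (‖F φ‖ / (2 * (K * L + 1))) * (K * L) ≤ ‖F φ‖ / (2 * (K * L + 1)) * (K * L + 1) :=
    mul_le_mul (min_le_right _ _) (by linarith) (by positivity) (by positivity)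
  have h3 : ‖F φ‖ / (2 * (K * L + 1)) * (K * L + 1) = ‖F φ‖ / 2 := by
    have : 0 < K * L + 1 := by positivity
    field_simp
  linarith

/-- The distribution defined by a square integrable function. -/
lemma sobDist.exists_ofMemLp {V : ℂ → ℂ} (hV : MemLp V 2) : ∃ F : sobDist,
    ∀ φ, F.1 φ = ∫ z, V z * φ z := by
  have hs : MemLp (fun z => conj (V z)) 2 := hV.star
  set g := hs.toLp
  let F : 𝓢(ℂ, ℂ) →ₗ[ℂ] ℂ :=
    ((innerSL ℂ g).comp (SchwartzMap.toLpCLM ℂ ℂ 2 volume)).toLinearMap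
  refine ⟨⟨F, 0, ‖g‖, norm_nonneg g, fun φ => norm_inner_le_norm g (φ.toLp 2 volume)⟩,
    fun φ => ?_⟩
  change inner ℂ g (φ.toLp 2 volume) = _
  rw [L2.inner_def]
  refine integral_congr_ae ?_
  filter_upwards [hs.coeFn_toLp, φ.coeFn_toLp 2 volume] with z h1 h2
  rw [h1, h2]
  simp [RCLike.inner_apply, mul_comm]

lemma ae_eq_zero_of_integral_schwartz {V : ℂ → ℂ} (hV : MemLp V 2)
    (h : ∀ φ : 𝓢(ℂ, ℂ), ∫ z, V z * φ z = 0) : ∀ᵐ z, V z = 0 := by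
  refine ae_eq_zero_of_integral_contDiff_smul_eq_zero (hV.locallyIntegrable (by norm_num))
    fun g hg hgs => ?_
  have hgs' : HasCompactSupport fun z => (g z : ℂ) := hgs.comp_left (g := Complex.ofReal) rfl
  have hg' : ContDiff ℝ (⊤ : ℕ∞) fun z => (g z : ℂ) := Complex.ofRealCLM.contDiff.comp hg
  rw [← h (hgs'.toSchwartzMap hg')]
  refine integral_congr_ae (Filter.Eventually.of_forall fun ξ => ?_)
  change g ξ • V ξ = V ξ * (g ξ : ℂ)
  rw [Complex.real_smul, mul_comm]

section

variable {C : Type*} [CommRing C] [Algebra ℝ C] {d : DiffPair C}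
    {M : Type*} [AddCommGroup M] [Module C M]

lemma Ast_conj (D : FlatConn d M) (b₁ b₂ : ℝ) (u : C) (W : M) :
    (3 : C) • D.Y (D.Y (D.X (D.X W))) - (4 * algebraMap ℝ C b₂) • D.Y (D.X (D.X (D.X W)))
      + D.X (D.X (D.X (D.X (D.X (D.X W))))) - (4 * algebraMap ℝ C b₁) • D.X (D.X (D.X (D.X W)))
      + D.X (D.X ((6 * u) • D.X (D.X W)))
    = D.X (D.X (Ast D (algebraMap ℝ C b₁) (algebraMap ℝ C b₂) u W)) := by
  have hc : ∀ (c : ℝ) m, D.X (algebraMap ℝ C c • m) = algebraMap ℝ C c • D.X m := fun c m => by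
    rw [D.leibX, Derivation.map_algebraMap, zero_smul, zero_add]
  have e3 : (3 : C) = algebraMap ℝ C 3 := (map_ofNat _ 3).symm
  have e4 : (4 : C) = algebraMap ℝ C 4 := (map_ofNat _ 4).symm
  simp only [Ast, e3, e4, ← map_mul, map_add, map_sub, hc, D.comm]

end

end

section

variable {κ₁ κ₂ κ₃ κ₄ b₁ b₂ α : ℝ}

lemma dispersion_ne (h12 : κ₁ < κ₂) (h23 : κ₂ < κ₃) (h34 : κ₃ < κ₄)
    (hb2 : b₁ + (κ₁ + κ₄) * b₂ = κ₁ ^ 2 + κ₁ * κ₄ + κ₄ ^ 2)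
    (hb1 : b₁ + (κ₂ + κ₃) * b₂ = κ₂ ^ 2 + κ₂ * κ₃ + κ₃ ^ 2) :
    κ₁ * κ₄ * (b₂ - κ₁ - κ₄) ≠ κ₂ * κ₃ * (b₂ - κ₂ - κ₃) := by
  intro h
  have e2 : (κ₂ - κ₁) * ((κ₂ - κ₄) * (κ₂ - (b₂ - κ₁ - κ₄))) = 0 := by
    linear_combination -h + κ₂ * hb2 - κ₂ * hb1
  have e3 : (κ₃ - κ₁) * ((κ₃ - κ₄) * (κ₃ - (b₂ - κ₁ - κ₄))) = 0 := by
    linear_combination -h + κ₃ * hb2 - κ₃ * hb1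
  rcases mul_eq_zero.1 e2 with h | h
  · linarith
  rcases mul_eq_zero.1 h with h | h
  · linarith
  rcases mul_eq_zero.1 e3 with h' | h'
  · linarith
  rcases mul_eq_zero.1 h' with h' | h'
  · linarith
  linarith

lemma resonance_gap (hα0 : 0 < α) (hα : α < (κ₄ - κ₁) / 2) {s : ℝ}
    (hα2 : α < |(|s - (κ₁ + κ₄) / 2| - (κ₄ - κ₁) / 2)|) :
    s - κ₁ ≠ α ∧ s - κ₄ ≠ α ∧ (κ₄ < s → κ₄ + α < s) ∧ (κ₁ < s → s ≤ κ₄ → s + α < κ₄) := by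
  refine ⟨fun e => ?_, fun e => ?_, fun e => ?_, fun e e' => ?_⟩ <;>
    rcases abs_cases (s - (κ₁ + κ₄) / 2) with h1 | h1 <;>
    rcases abs_cases (|s - (κ₁ + κ₄) / 2| - (κ₄ - κ₁) / 2) with h2 | h2 <;> linarith

lemma nonresonant (h12 : κ₁ < κ₂) (h23 : κ₂ < κ₃) (h34 : κ₃ < κ₄)
    (hb2 : b₁ + (κ₁ + κ₄) * b₂ = κ₁ ^ 2 + κ₁ * κ₄ + κ₄ ^ 2)
    (hb1 : b₁ + (κ₂ + κ₃) * b₂ = κ₂ ^ 2 + κ₂ * κ₃ + κ₃ ^ 2)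
    (hα0 : 0 < α)
    (hs : κ₄ < b₂ - κ₁ - κ₄ → κ₄ + α < b₂ - κ₁ - κ₄)
    (hs' : κ₁ < b₂ - κ₁ - κ₄ → b₂ - κ₁ - κ₄ ≤ κ₄ → b₂ - κ₁ - κ₄ + α < κ₄) :
    b₂ - κ₂ - κ₃ - κ₂ ≠ α ∧ b₂ - κ₂ - κ₃ - κ₃ ≠ α := by
  set s := b₂ - κ₁ - κ₄ with hsd
  set t := b₂ - κ₂ - κ₃ with htd
  set δ := κ₂ * κ₃ * t - κ₁ * κ₄ * s with hδ
  have f : ∀ x, (x - κ₁) * (x - κ₄) * (x - s) - δ = (x - κ₂) * (x - κ₃) * (x - t) := by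
    intro x
    rw [hδ, htd, hsd]
    linear_combination x * hb2 - x * hb1
  suffices t < κ₁ ∨ κ₃ + α < t by
    rcases this with h | h <;> exact ⟨by intro e; linarith, by intro e; linarith⟩
  rcases lt_trichotomy δ 0 with hd | hd | hd
  · left
    have := f κ₁
    have h1 : 0 < (κ₂ - κ₁) * (κ₃ - κ₁) := mul_pos (by linarith) (by linarith)
    by_contra! h
    nlinarith [mul_nonneg h1.le (sub_nonneg.2 h)]
  · exact absurd (by linarith) (dispersion_ne h12 h23 h34 hb2 hb1)
  · right
    have h4 : κ₄ < t := by
      have := f κ₄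
      have h1 : 0 < (κ₄ - κ₂) * (κ₄ - κ₃) := mul_pos (by linarith) (by linarith)
      by_contra! h
      nlinarith [mul_nonneg h1.le (sub_nonneg.2 h)]
    have h3 : κ₃ < s := by
      have := f κ₃
      have h1 : 0 < (κ₃ - κ₁) * (κ₄ - κ₃) := mul_pos (by linarith) (by linarith)
      by_contra! h
      nlinarith [mul_nonneg h1.le (sub_nonneg.2 h)]
    rcases le_or_gt s κ₄ with h | h
    · linarith [hs' (by linarith) h]
    · have hst : s < t := by
        have := f s
        have h1 : 0 < (s - κ₂) * (s - κ₃) := mul_pos (by linarith) (by linarith)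
        by_contra! h
        nlinarith [mul_nonneg h1.le (sub_nonneg.2 h)]
      linarith [hs h]

end

section

open scoped SchwartzMap LineDeriv FourierTransform ComplexConjugate

/-- The weighted real test function `e^{a x + b y} ℓ(φ)`. -/
noncomputable def weightedTest (a b : ℝ) (ℓ : ℂ →L[ℝ] ℝ) (φ : 𝓢(ℂ, ℂ)) (x y : ℝ) : ℝ :=
  Real.exp (a * x + b * y) * ℓ (φ ⟨x, y⟩)

variable {a b : ℝ} (ℓ : ℂ →L[ℝ] ℝ) (φ : 𝓢(ℂ, ℂ))

lemma pX_weightedTest :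
    pX (weightedTest a b ℓ φ) = weightedTest a b ℓ (-pdT 1 a φ) := by
  ext x y
  have hz : HasDerivAt (fun s : ℝ => (⟨s, y⟩ : ℂ)) 1 x := by
    have := (Complex.ofRealCLM.hasDerivAt (x := x)).add_const (y * Complex.I)
    refine (this.congr_deriv (by simp)).congr_of_eventuallyEq
      (Filter.Eventually.of_forall fun s => ?_)
    simp [Complex.mk_eq_add_mul_I]
  have h1 := ℓ.hasFDerivAt.comp_hasDerivAt x ((φ.hasFDerivAt ⟨x, y⟩).comp_hasDerivAt x hz)
  have h2 := (((hasDerivAt_id' x).const_mul a).add_const (b * y)).exp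
  refine (h2.mul h1).deriv.trans ?_
  have e : (-pdT 1 a φ) ⟨x, y⟩ = fderiv ℝ φ ⟨x, y⟩ 1 + a • φ ⟨x, y⟩ := by
    rw [pdT_apply]
    simp only [neg_apply, sub_apply, smul_apply, pd_apply, Complex.real_smul, smul_eq_mul]
    ring
  rw [weightedTest, e, map_add, map_smul, smul_eq_mul]
  simp only [Function.comp_apply]
  ring

lemma pY_weightedTest :
    pY (weightedTest a b ℓ φ) = weightedTest a b ℓ (-pdT Complex.I b φ) := by
  ext x y
  have hz : HasDerivAt (fun s : ℝ => (⟨x, s⟩ : ℂ)) Complex.I y := by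
    have := ((Complex.ofRealCLM.hasDerivAt (x := y)).mul_const Complex.I).const_add (x : ℂ)
    refine (this.congr_deriv (by simp)).congr_of_eventuallyEq
      (Filter.Eventually.of_forall fun s => ?_)
    simp [Complex.mk_eq_add_mul_I]
  have h1 := ℓ.hasFDerivAt.comp_hasDerivAt y ((φ.hasFDerivAt ⟨x, y⟩).comp_hasDerivAt y hz)
  have h2 := (((hasDerivAt_id' y).const_mul b).const_add (a * x)).exp
  refine (h2.mul h1).deriv.trans ?_
  have e : (-pdT Complex.I b φ) ⟨x, y⟩ = fderiv ℝ φ ⟨x, y⟩ Complex.I + b • φ ⟨x, y⟩ := by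
    rw [pdT_apply]
    simp only [neg_apply, sub_apply, smul_apply, pd_apply, Complex.real_smul, smul_eq_mul]
    ring
  rw [weightedTest, e, map_add, map_smul, smul_eq_mul]
  simp only [Function.comp_apply]
  ring

lemma contDiff_weightedTest :
    ContDiff ℝ (⊤ : ℕ∞) fun p : ℝ × ℝ => weightedTest a b ℓ φ p.1 p.2 := by
  have h : ContDiff ℝ (⊤ : ℕ∞) fun p : ℝ × ℝ => ℓ (φ ⟨p.1, p.2⟩) :=
    ℓ.contDiff.comp ((φ.smooth _).comp Complex.equivRealProdCLM.symm.contDiff)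
  exact ContDiff.mul (by fun_prop) h

lemma hasCompactSupport_weightedTest (hφ : HasCompactSupport φ) :
    HasCompactSupport fun p : ℝ × ℝ => weightedTest a b ℓ φ p.1 p.2 := by
  have h : HasCompactSupport fun p : ℝ × ℝ => φ ⟨p.1, p.2⟩ :=
    hφ.comp_homeomorph Complex.equivRealProdCLM.symm.toHomeomorph
  exact (h.comp_left (map_zero ℓ)).mul_left

/-- The transpose of the linearized operator conjugated by the weight, on test functions. -/
noncomputable def transposeOp (a b b₁ b₂ : ℝ) (u : bddSmooth) (φ : 𝓢(ℂ, ℂ)) : 𝓢(ℂ, ℂ) :=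
  (3 : ℂ) • pdT Complex.I b (pdT Complex.I b φ) - (4 * b₂ : ℂ) • pdT 1 a (pdT Complex.I b φ)
    + pdT 1 a (pdT 1 a (pdT 1 a (pdT 1 a φ))) - (4 * b₁ : ℂ) • pdT 1 a (pdT 1 a φ)
    + (6 : ℂ) • mulT u (pdT 1 a (pdT 1 a φ))

lemma sobDist_transposeOp (b₁ b₂ : ℝ) (u : bddSmooth) (F : sobDist) :
    ((3 : bddSmooth) • (planeConn a b).Y ((planeConn a b).Y F)
      - (4 * algebraMap ℝ bddSmooth b₂) • (planeConn a b).Y ((planeConn a b).X F)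
      + (planeConn a b).X ((planeConn a b).X ((planeConn a b).X ((planeConn a b).X F)))
      - (4 * algebraMap ℝ bddSmooth b₁) • (planeConn a b).X ((planeConn a b).X F)
      + (planeConn a b).X ((planeConn a b).X ((6 * u) • F)) : sobDist).1 φ
      = F.1 (transposeOp a b b₁ b₂ u φ) := by
  have e3 : (3 : bddSmooth) = algebraMap ℝ bddSmooth 3 := (map_ofNat _ 3).symm
  have e4 : (4 : bddSmooth) = algebraMap ℝ bddSmooth 4 := (map_ofNat _ 4).symm
  have e6 : (6 : bddSmooth) = algebraMap ℝ bddSmooth 6 := (map_ofNat _ 6).symm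
  rw [e3, e4, e6, ← map_mul, ← map_mul]
  have e : ∀ G₁ G₂ G₃ G₄ G₅ : sobDist, ∀ c₁ c₂ c₃ : ℝ, (algebraMap ℝ bddSmooth c₁ • G₁
      - algebraMap ℝ bddSmooth c₂ • G₂ + G₃ - algebraMap ℝ bddSmooth c₃ • G₄ + G₅).1 φ
      = c₁ * G₁.1 φ - c₂ * G₂.1 φ + G₃.1 φ - c₃ * G₄.1 φ + G₅.1 φ := by
    intro G₁ G₂ G₃ G₄ G₅ c₁ c₂ c₃
    change G₁.1 (mulT _ φ) - G₂.1 (mulT _ φ) + G₃.1 φ - G₄.1 (mulT _ φ) + G₅.1 φ = _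
    simp only [mulT_algebraMap, map_smul, smul_eq_mul]
  rw [e]
  simp only [planeConn_X, planeConn_Y, sobDist.smul_apply, mulT_mul, mulT_algebraMap, transposeOp,
    map_add, map_sub, map_smul, smul_eq_mul]
  push_cast
  rw [pdT_comm 1 Complex.I a b φ]

end

section

open scoped SchwartzMap LineDeriv FourierTransform ComplexConjugate

lemma integral_comp_re_im (f : ℝ → ℝ → ℂ) : ∫ z : ℂ, f z.re z.im = ∫ p : ℝ × ℝ, f p.1 p.2 :=
  Complex.volume_preserving_equiv_real_prod.integral_comp' (fun p : ℝ × ℝ => f p.1 p.2)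

/-- `V` solves the weighted equation against every compactly supported test function. -/
lemma integral_transposeOp_eq_zero {a b b₁ b₂ : ℝ} {u : bddSmooth} {U : ℝ → ℝ → ℂ} {u₂ : ℝ → ℝ → ℝ}
    (hu : ∀ z : ℂ, u₂ z.re z.im = u.1 z)
    (hV : MemLp (fun z : ℂ => U z.re z.im * (Real.exp (a * z.re + b * z.im) : ℂ)) 2)
    (hweak : ∀ ψ : ℝ → ℝ → ℝ, ContDiff ℝ (⊤ : ℕ∞) (fun p : ℝ × ℝ => ψ p.1 p.2) →
      HasCompactSupport (fun p : ℝ × ℝ => ψ p.1 p.2) →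
      (∫ p : ℝ × ℝ,
        (U p.1 p.2 *
            ((3 * pY (pY ψ) p.1 p.2 - 4*b₂ * pX (pY ψ) p.1 p.2
                + pX (pX (pX (pX ψ))) p.1 p.2
                - 4*b₁ * pX (pX ψ) p.1 p.2 : ℝ) : ℂ)
          + 6 * ((u₂ p.1 p.2 : ℝ) : ℂ) * U p.1 p.2
              * ((pX (pX ψ) p.1 p.2 : ℝ) : ℂ))) = 0)
    (φ : 𝓢(ℂ, ℂ)) (hφ : HasCompactSupport φ) :
    ∫ z : ℂ, U z.re z.im * (Real.exp (a * z.re + b * z.im) : ℂ) *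
      transposeOp a b b₁ b₂ u φ z = 0 := by
  set Ψ := transposeOp a b b₁ b₂ u φ with hΨ
  have hℓ : ∀ ℓ : ℂ →L[ℝ] ℝ, ∫ z : ℂ, U z.re z.im * (Real.exp (a * z.re + b * z.im) : ℂ) *
      (ℓ (Ψ z) : ℂ) = 0 := by
    intro ℓ
    rw [← hweak (weightedTest a b ℓ φ) (contDiff_weightedTest ℓ φ)
      (hasCompactSupport_weightedTest ℓ φ hφ), ← integral_comp_re_im (fun x y => U x y *
            ((3 * pY (pY (weightedTest a b ℓ φ)) x y - 4*b₂ * pX (pY (weightedTest a b ℓ φ)) x y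
                + pX (pX (pX (pX (weightedTest a b ℓ φ)))) x y
                - 4*b₁ * pX (pX (weightedTest a b ℓ φ)) x y : ℝ) : ℂ)
          + 6 * ((u₂ x y : ℝ) : ℂ) * U x y * ((pX (pX (weightedTest a b ℓ φ)) x y : ℝ) : ℂ))]
    refine integral_congr_ae (Filter.Eventually.of_forall fun z => ?_)
    simp only [pX_weightedTest, pY_weightedTest, map_neg, neg_neg, weightedTest, hu]
    have e : ℓ (Ψ z) = 3 * ℓ (pdT Complex.I b (pdT Complex.I b φ) z)
        - 4 * b₂ * ℓ (pdT 1 a (pdT Complex.I b φ) z) + ℓ (pdT 1 a (pdT 1 a (pdT 1 a (pdT 1 a φ))) z)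
        - 4 * b₁ * ℓ (pdT 1 a (pdT 1 a φ) z) + 6 * u.1 z * ℓ (pdT 1 a (pdT 1 a φ) z) := by
      have h : Ψ z = (3 : ℝ) • pdT Complex.I b (pdT Complex.I b φ) z
        - (4 * b₂) • pdT 1 a (pdT Complex.I b φ) z + pdT 1 a (pdT 1 a (pdT 1 a (pdT 1 a φ))) z
        - (4 * b₁) • pdT 1 a (pdT 1 a φ) z + (6 * u.1 z) • pdT 1 a (pdT 1 a φ) z := by
        simp only [hΨ, transposeOp, add_apply, sub_apply, smul_apply, mulT_apply,
          Complex.real_smul, smul_eq_mul]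
        push_cast
        ring
      simp only [h, map_add, map_sub, map_smul, smul_eq_mul]
    rw [e]
    push_cast
    ring
  have hi : Integrable fun z : ℂ => U z.re z.im * (Real.exp (a * z.re + b * z.im) : ℂ) * Ψ z :=
    hV.integrable_mul (Ψ.memLp 2 volume)
  have hiℓ : ∀ ℓ : ℂ →L[ℝ] ℝ, (∀ w, |ℓ w| ≤ ‖w‖) →
      Integrable fun z : ℂ => U z.re z.im * (Real.exp (a * z.re + b * z.im) : ℂ)
        * (ℓ (Ψ z) : ℂ) := by
    intro ℓ h
    refine hi.mono (hV.1.mul (Complex.continuous_ofReal.comp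
      (ℓ.continuous.comp Ψ.continuous)).aestronglyMeasurable)
      (Filter.Eventually.of_forall fun z => ?_)
    rw [norm_mul, norm_mul _ (Ψ z), Complex.norm_real]
    exact mul_le_mul_of_nonneg_left (h _) (norm_nonneg _)
  have hre := hℓ Complex.reCLM
  have him := hℓ Complex.imCLM
  calc _ = ∫ z : ℂ, (U z.re z.im * (Real.exp (a * z.re + b * z.im) : ℂ) * (Complex.reCLM (Ψ z) : ℂ)
        + Complex.I * (U z.re z.im * (Real.exp (a * z.re + b * z.im) : ℂ) *
          (Complex.imCLM (Ψ z) : ℂ))) := by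
        refine integral_congr_ae (Filter.Eventually.of_forall fun z => ?_)
        change U z.re z.im * (Real.exp (a * z.re + b * z.im) : ℂ) * Ψ z = _
        nth_rewrite 1 [← Complex.re_add_im (Ψ z)]
        simp only [Complex.reCLM_apply, Complex.imCLM_apply]
        ring
    _ = 0 := by
        rw [integral_add (hiℓ _ Complex.abs_re_le_norm)
          ((hiℓ _ Complex.abs_im_le_norm).const_mul _),
          integral_const_mul, hre, him, mul_zero, add_zero]

end

/-- λ = 0 is not an eigenvalue of the linearized KP-II operator
around a P-type 2-line soliton in the weighted space L²(e^{2αz₁}). -/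
theorem zero_not_eigenvalue_P_type
    (κ₁ κ₂ κ₃ κ₄ a₂₃ a₁₄ c₂₃ c₁₄ ω₂₃ ω₁₄ b₁ b₂ α : ℝ)
    (h12 : κ₁ < κ₂) (h23 : κ₂ < κ₃) (h34 : κ₃ < κ₄)
    (hne : κ₂ + κ₃ ≠ κ₁ + κ₄)
    (ha23 : a₂₃ = (κ₂ + κ₃)/2) (ha14 : a₁₄ = (κ₁ + κ₄)/2)
    (hc23 : c₂₃ = (κ₃ - κ₂)^2/4) (hc14 : c₁₄ = (κ₄ - κ₁)^2/4)
    (hω23 : ω₂₃ = κ₂^2 + κ₂*κ₃ + κ₃^2) (hω14 : ω₁₄ = κ₁^2 + κ₁*κ₄ + κ₄^2)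
    (hb1 : b₁ + 2*a₂₃*b₂ = ω₂₃) (hb2 : b₁ + 2*a₁₄*b₂ = ω₁₄)
    (hα0 : 0 < α) (hα1 : α < Real.sqrt c₂₃)
    (hα2 : α < |(|b₂ - 3*a₁₄| - Real.sqrt c₁₄)|)
    (U₂ : ℝ → ℝ → ℂ)
    (hUmeas : Measurable fun p : ℝ × ℝ => U₂ p.1 p.2)
    (hUL2 : Integrable fun p : ℝ × ℝ =>
      ‖U₂ p.1 p.2‖^2 * Real.exp (2*α*(p.1 + 2*a₂₃*p.2)))
    (hweak : ∀ ψ : ℝ → ℝ → ℝ,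
      ContDiff ℝ (⊤ : ℕ∞) (fun p : ℝ × ℝ => ψ p.1 p.2) →
      HasCompactSupport (fun p : ℝ × ℝ => ψ p.1 p.2) →
      (∫ p : ℝ × ℝ,
        (U₂ p.1 p.2 *
            ((3 * pY (pY ψ) p.1 p.2 - 4*b₂ * pX (pY ψ) p.1 p.2
                + pX (pX (pX (pX ψ))) p.1 p.2
                - 4*b₁ * pX (pX ψ) p.1 p.2 : ℝ) : ℂ)
          + 6 * ((Pu2 κ₁ κ₂ κ₃ κ₄ p.1 p.2 : ℝ) : ℂ) * U₂ p.1 p.2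
              * ((pX (pX ψ) p.1 p.2 : ℝ) : ℂ))) = 0) :
    ∀ᵐ p : ℝ × ℝ ∂volume, U₂ p.1 p.2 = 0 := by
  have hα1' : α < (κ₃ - κ₂) / 2 := by
    rwa [hc23, show (κ₃ - κ₂) ^ 2 / 4 = ((κ₃ - κ₂) / 2) ^ 2 by ring,
      Real.sqrt_sq (by linarith)] at hα1
  have hα2' : α < |(|b₂ - κ₁ - κ₄ - (κ₁ + κ₄) / 2| - (κ₄ - κ₁) / 2)| := by
    rwa [hc14, show (κ₄ - κ₁) ^ 2 / 4 = ((κ₄ - κ₁) / 2) ^ 2 by ring,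
      Real.sqrt_sq (by linarith), ha14,
      show b₂ - 3 * ((κ₁ + κ₄) / 2) = b₂ - κ₁ - κ₄ - (κ₁ + κ₄) / 2 by ring] at hα2
  have hb1' : b₁ + (κ₂ + κ₃) * b₂ = κ₂ ^ 2 + κ₂ * κ₃ + κ₃ ^ 2 := by
    rw [← hω23, ← hb1, ha23]; ring
  have hb2' : b₁ + (κ₁ + κ₄) * b₂ = κ₁ ^ 2 + κ₁ * κ₄ + κ₄ ^ 2 := by
    rw [← hω14, ← hb2, ha14]; ring
  obtain ⟨n3, n4, hgap, hgap'⟩ := resonance_gap hα0 (by linarith) hα2'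
  obtain ⟨n3', n4'⟩ := nonresonant h12 h23 h34 hb2' hb1' hα0 hgap hgap'
  have hr' : Roots κ₂ κ₃ (b₂ - κ₂ - κ₃) b₁ b₂ (κ₂ * κ₃ * (b₂ - κ₂ - κ₃)) :=
    ⟨by linear_combination hb1', by ring, rfl⟩
  have hr : Roots κ₁ κ₄ (b₂ - κ₁ - κ₄) b₁ b₂ (κ₁ * κ₄ * (b₂ - κ₁ - κ₄)) :=
    ⟨by linear_combination hb2', by ring, rfl⟩
  obtain ⟨Q, q₀, h, H, hQ, hq₀, hh, hu⟩ := exists_dressing h12 h23 h34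
  set b := 2 * α * a₂₃ with hb
  have hD := planeConn_admissible α b
  have hV : MemLp (fun z : ℂ => U₂ z.re z.im * (Real.exp (α * z.re + b * z.im) : ℂ)) 2 := by
    have hm : Measurable fun z : ℂ => U₂ z.re z.im * (Real.exp (α * z.re + b * z.im) : ℂ) :=
      (hUmeas.comp Complex.measurableEquivRealProd.measurable).mul (by fun_prop)
    rw [memLp_two_iff_integrable_sq_norm hm.aestronglyMeasurable]
    have := (Complex.volume_preserving_equiv_real_prod.integrable_comp_emb
      Complex.measurableEquivRealProd.measurableEmbedding).2 hUL2
    refine this.congr (Filter.Eventually.of_forall fun z => ?_)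
    change ‖U₂ z.re z.im‖ ^ 2 * Real.exp (2 * α * (z.re + 2 * a₂₃ * z.im)) =
      ‖U₂ z.re z.im * (Real.exp (α * z.re + b * z.im) : ℂ)‖ ^ 2
    rw [norm_mul, mul_pow, Complex.norm_real, Real.norm_of_nonneg (Real.exp_pos _).le,
      ← Real.exp_nat_mul, hb]
    congr 2
    push_cast
    ring
  obtain ⟨F, hF⟩ := sobDist.exists_ofMemLp hV
  have hzero : F = 0 := by
    obtain ⟨W, hW⟩ : ∃ W, (planeConn α b).X ((planeConn α b).X W) = F := by
      have hb := hD.bij 0 (neg_ne_zero.2 hα0.ne').symm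
      simp only [map_zero, zero_smul, sub_zero] at hb
      obtain ⟨W', rfl⟩ := hb.2 F
      obtain ⟨W, rfl⟩ := hb.2 W'
      exact ⟨W, rfl⟩
    have hA := Ast_conj (planeConn α b) b₁ b₂
      (2 * planeDiff.dx Q + 2 * planeDiff.dx (planeDiff.dx h * H + q₀)) W
    rw [hW] at hA
    have hAst := (sobDist.eq_zero_of_hasCompactSupport _ fun φ hφ =>
      (sobDist_transposeOp φ b₁ b₂ _ F).trans ((hF _).trans
        (integral_transposeOp_eq_zero hu hV hweak φ hφ))).symm.trans hA
    have hb := hD.bij 0 (neg_ne_zero.2 hα0.ne').symm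
    simp only [map_zero, zero_smul, sub_zero] at hb
    have hAW := hb.1 (hb.1 (hAst.symm.trans (by simp)) |>.trans (map_zero _).symm)
    have hW0 := hh.second_step hD hα0.ne' hQ hq₀ hr' hr (dispersion_ne h12 h23 h34 hb2' hb1')
      (by linarith) (by linarith) n3 n4
      (hQ.first_step hD hα0.ne' hr' h23.ne (by linarith) (by linarith) n3' n4'
        (planeConn_vacuum α b b₁ b₂)) W hAW
    rw [← hW, hW0, map_zero, map_zero]
  have hVz := ae_eq_zero_of_integral_schwartz hV fun φ => by rw [← hF, hzero]; rfl
  have hU : ∀ᵐ z : ℂ, U₂ z.re z.im = 0 := by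
    filter_upwards [hVz] with z hz
    exact (mul_eq_zero.1 hz).resolve_right (by exact_mod_cast (Real.exp_pos _).ne')
  exact Complex.volume_preserving_equiv_real_prod.symm.quasiMeasurePreserving.ae hU
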